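/- arXiv:2605.20953 — 2 statements merged into one kernel-verified Lean document; each statement's English description precedes it below -/
import Mathlib

section
/- Let α = (√5 − 1)/2 be the golden mean and Sℓ(n) = Σ_{j=1}^{n} log(2 − 2cos(2πjα)). Then liminf_{n→∞} Sℓ(n)/log(n) = 0. -/
open Filter

/-- Integrand of the logarithm of the double sine function with periods `1` and `α`. -/
noncomputable def doubleSineKernel (α x t : ℝ) : ℝ :=
  (Real.sinh ((1 + α - 2 * x) * t) / (Real.sinh t * Real.sinh (α * t))
    - (1 + α - 2 * x) / (α * t)) / (2 * t)

/-- Integrand of an integral representation of `log (2 sin πx)`. -/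
noncomputable def sineKernel (x t : ℝ) : ℝ :=
  (1 / t - Real.cosh ((1 - 2 * x) * t) / Real.sinh t) / t

lemma abs_sinh_sub_self_le {s : ℝ} (hs : |s| ≤ 1) : |Real.sinh s - s| ≤ |s| ^ 3 := by
  have h1 := Real.exp_bound hs (n := 3) (by norm_num)
  have h2 := Real.exp_bound (x := -s) (by rwa [abs_neg]) (n := 3) (by norm_num)
  rw [Real.sinh_eq]
  simp only [Finset.sum_range_succ, Finset.sum_range_zero, abs_neg, Nat.factorial,
    Nat.succ_eq_add_one] at h1 h2
  norm_num at h1 h2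
  have h3 : 0 ≤ |s| ^ 3 := by positivity
  rw [abs_le] at *
  constructor <;> nlinarith [h1.1, h1.2, h2.1, h2.2]

lemma sinh_mul_le_exp_mul_sinh {a b t : ℝ} (hab : a ≤ b) (ht : 0 ≤ t) :
    Real.sinh (a * t) ≤ Real.exp (-(b - a) * t) * Real.sinh (b * t) := by
  rw [Real.sinh_eq, Real.sinh_eq, mul_div_assoc', mul_sub, ← Real.exp_add, ← Real.exp_add]
  have h1 : -(b - a) * t + b * t = a * t := by ring
  have h2 : Real.exp (-(b - a) * t + -(b * t)) ≤ Real.exp (-(a * t)) := by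
    apply Real.exp_le_exp.2
    nlinarith [mul_nonneg (sub_nonneg.2 hab) ht]
  rw [h1]
  linarith

lemma abs_sinh_mul_le {a b t : ℝ} (hab : |a| ≤ b) (ht : 0 ≤ t) :
    |Real.sinh (a * t)| ≤ Real.exp (-(b - |a|) * t) * Real.sinh (b * t) := by
  have h := sinh_mul_le_exp_mul_sinh hab ht
  rcases abs_cases a with ⟨h1, h2⟩ | ⟨h1, h2⟩
  · rw [h1] at h ⊢
    rwa [abs_of_nonneg (Real.sinh_nonneg_iff.2 (mul_nonneg h2 ht))]
  · rw [h1] at h ⊢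
    rw [neg_mul a, Real.sinh_neg] at h
    rwa [abs_of_nonpos (Real.sinh_nonpos_iff.2 (by nlinarith))]

lemma cosh_le_one_add_inv_mul_sinh {s : ℝ} (hs : 0 < s) :
    Real.cosh s ≤ (1 + 1 / s) * Real.sinh s := by
  have h1 : s ≤ Real.sinh s := Real.self_le_sinh_iff.2 hs.le
  have h2 : Real.exp (-s) ≤ 1 := Real.exp_le_one_iff.2 (by linarith)
  have h3 : Real.cosh s - Real.sinh s = Real.exp (-s) := Real.cosh_sub_sinh s
  have h4 : 1 ≤ 1 / s * Real.sinh s := by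
    rw [one_div, inv_mul_eq_div, le_div_iff₀ hs]; linarith
  linarith

lemma abs_doubleSineKernel_le_of_le {α x t : ℝ} (hα : 0 < α) (hα1 : α ≤ 1) (hx : 0 < x)
    (hx1 : x < 1 + α) (ht : 0 < t) (ht2 : t ≤ 1 / 2) :
    |doubleSineKernel α x t| ≤ 36 / α ^ 2 := by
  have hpt : ∀ c : ℝ, |c| ≤ 2 → |Real.sinh (c * t) - c * t| ≤ 8 * t ^ 3 := by
    intro c hc
    have h0 : |c * t| ≤ 2 * t := by
      rw [abs_mul, abs_of_pos ht]; nlinarith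
    calc _ ≤ |c * t| ^ 3 := abs_sinh_sub_self_le (by linarith)
      _ ≤ (2 * t) ^ 3 := by gcongr
      _ = _ := by ring
  have ha : |1 + α - 2 * x| ≤ 2 := by rw [abs_le]; constructor <;> linarith
  unfold doubleSineKernel
  set a := 1 + α - 2 * x
  have h1 := hpt a ha
  have h2 := hpt α (by rw [abs_of_pos hα]; linarith)
  have h3 := hpt 1 (by norm_num)
  rw [one_mul] at h3
  have hs1 : t ≤ Real.sinh t := Real.self_le_sinh_iff.2 ht.le
  have hs2 : α * t ≤ Real.sinh (α * t) := Real.self_le_sinh_iff.2 (by positivity)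
  have hp1 : 0 < Real.sinh t := by linarith
  have hp2 : 0 < Real.sinh (α * t) := by nlinarith
  generalize Real.sinh (a * t) = A at *
  generalize Real.sinh (α * t) = B at *
  generalize Real.sinh t = C at *
  have key : (A / (C * B) - a / (α * t)) / (2 * t)
      = (α * t * (A - a * t) - a * (t * (B - α * t) + α * t * (C - t) + (C - t) * (B - α * t)))
        / (C * B * (α * t) * (2 * t)) := by
    field_simp
    ring
  have hden : 2 * α ^ 2 * t ^ 4 ≤ C * B * (α * t) * (2 * t) := by
    have : t * (α * t) ≤ C * B := mul_le_mul hs1 hs2 (by positivity) hp1.le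
    calc 2 * α ^ 2 * t ^ 4 = t * (α * t) * (α * t) * (2 * t) := by ring
      _ ≤ _ := by gcongr
  have hnum : |α * t * (A - a * t)
      - a * (t * (B - α * t) + α * t * (C - t) + (C - t) * (B - α * t))| ≤ 72 * t ^ 4 := by
    have e1 : |α * t * (A - a * t)| ≤ t * (8 * t ^ 3) := by
      rw [abs_mul, abs_mul, abs_of_pos hα, abs_of_pos ht]
      gcongr
      nlinarith
    have e2 : |t * (B - α * t)| ≤ t * (8 * t ^ 3) := by
      rw [abs_mul, abs_of_pos ht]; gcongr
    have e3 : |α * t * (C - t)| ≤ t * (8 * t ^ 3) := by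
      rw [abs_mul, abs_mul, abs_of_pos hα, abs_of_pos ht]
      gcongr
      nlinarith
    have e4 : |(C - t) * (B - α * t)| ≤ 8 * t ^ 3 * (8 * t ^ 3) := by
      rw [abs_mul]; gcongr
    have e5 : |a * (t * (B - α * t) + α * t * (C - t) + (C - t) * (B - α * t))|
        ≤ 2 * (t * (8 * t ^ 3) + t * (8 * t ^ 3) + 8 * t ^ 3 * (8 * t ^ 3)) := by
      rw [abs_mul]
      refine mul_le_mul ha ?_ (abs_nonneg _) (by norm_num)
      exact (abs_add_three _ _ _).trans (by linarith)
    have e6 : t ^ 6 ≤ t ^ 4 * (1 / 4) := by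
      rw [show t ^ 6 = t ^ 4 * t ^ 2 by ring]
      gcongr
      nlinarith
    calc _ ≤ _ := abs_sub _ _
      _ ≤ 72 * t ^ 4 := by nlinarith
  rw [key, abs_div, abs_of_pos (show 0 < C * B * (α * t) * (2 * t) by positivity)]
  calc _ ≤ 72 * t ^ 4 / (2 * α ^ 2 * t ^ 4) := by gcongr
    _ = _ := by field_simp; norm_num

lemma continuousOn_doubleSineKernel {α : ℝ} (hα : 0 < α) (x : ℝ) :
    ContinuousOn (doubleSineKernel α x) (Set.Ioi 0) := by
  unfold doubleSineKernel
  have h1 : ∀ t ∈ Set.Ioi (0 : ℝ), Real.sinh t * Real.sinh (α * t) ≠ 0 := fun t ht =>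
    (mul_pos (Real.sinh_pos_iff.2 ht) (Real.sinh_pos_iff.2 (mul_pos hα ht))).ne'
  have h2 : ∀ t ∈ Set.Ioi (0 : ℝ), α * t ≠ 0 := fun t ht => (mul_pos hα ht).ne'
  have h3 : ∀ t ∈ Set.Ioi (0 : ℝ), 2 * t ≠ 0 := fun t ht => (mul_pos two_pos ht).ne'
  have hs := Real.continuous_sinh
  refine ContinuousOn.div (ContinuousOn.sub (ContinuousOn.div ?_ ?_ h1)
    (ContinuousOn.div ?_ ?_ h2)) ?_ h3 <;> exact Continuous.continuousOn (by fun_prop)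

lemma abs_doubleSineKernel_le_of_ge {α x t : ℝ} (hα : 0 < α) (hα1 : α ≤ 1) (hx : 0 < x)
    (hx1 : x < 1 + α) (ht : 1 / 2 ≤ t) :
    |doubleSineKernel α x t| ≤ (4 + 2 / α) * Real.exp (-(1 + α - |1 + α - 2 * x|) * t)
      + 1 / α * t ^ (-2 : ℝ) := by
  have ht0 : 0 < t := by linarith
  have ha : |1 + α - 2 * x| ≤ 1 + α := by rw [abs_le]; constructor <;> linarith
  have hn := abs_sinh_mul_le ha ht0.le
  unfold doubleSineKernel
  set a := 1 + α - 2 * x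
  have hC : 0 < Real.sinh t := Real.sinh_pos_iff.2 ht0
  have hB : 0 < Real.sinh (α * t) := Real.sinh_pos_iff.2 (by positivity)
  set E := Real.exp (-(1 + α - |a|) * t)
  have hE : 0 < E := Real.exp_pos _
  have hsum : Real.sinh ((1 + α) * t)
      ≤ (4 + 2 / α) * (Real.sinh t * Real.sinh (α * t)) := by
    rw [add_mul, one_mul, Real.sinh_add]
    have c1 := cosh_le_one_add_inv_mul_sinh ht0
    have c2 := cosh_le_one_add_inv_mul_sinh (show 0 < α * t by positivity)
    have d1 : 1 / t ≤ 2 := by rw [div_le_iff₀ ht0]; linarith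
    have d2 : 1 / (α * t) ≤ 2 / α := by
      rw [div_le_div_iff₀ (by positivity) hα]; nlinarith
    have f1 : Real.cosh t ≤ (1 + 2) * Real.sinh t := c1.trans (by gcongr)
    have f2 : Real.cosh (α * t) ≤ (1 + 2 / α) * Real.sinh (α * t) := c2.trans (by gcongr)
    calc _ ≤ Real.sinh t * ((1 + 2 / α) * Real.sinh (α * t))
        + (1 + 2) * Real.sinh t * Real.sinh (α * t) := by gcongr
      _ = _ := by ring
  have hratio : |Real.sinh (a * t) / (Real.sinh t * Real.sinh (α * t))| ≤ (4 + 2 / α) * E := by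
    rw [abs_div, abs_of_pos (mul_pos hC hB), div_le_iff₀ (mul_pos hC hB)]
    calc _ ≤ _ := hn
      _ ≤ E * ((4 + 2 / α) * (Real.sinh t * Real.sinh (α * t))) := by gcongr
      _ = _ := by ring
  have hlin : |a / (α * t)| ≤ 2 / (α * t) := by
    rw [abs_div, abs_of_pos (mul_pos hα ht0)]
    gcongr
    linarith
  rw [abs_div, abs_of_pos (show 0 < 2 * t by positivity), div_le_iff₀ (by positivity)]
  have hpow : t ^ (-2 : ℝ) = 1 / t ^ 2 := by
    rw [Real.rpow_neg ht0.le, one_div]; norm_num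
  rw [hpow]
  have h5 : 1 / α * (1 / t ^ 2) * (2 * t) = 2 / (α * t) := by field_simp
  have h6 : (4 + 2 / α) * E ≤ (4 + 2 / α) * E * (2 * t) :=
    le_mul_of_one_le_right (by positivity) (by linarith)
  calc _ ≤ _ := abs_sub _ _
    _ ≤ (4 + 2 / α) * E * (2 * t) + 2 / (α * t) := by linarith
    _ = _ := by rw [← h5]; ring

lemma integrableOn_doubleSineKernel {α x : ℝ} (hα : 0 < α) (hα1 : α ≤ 1) (hx : 0 < x)
    (hx1 : x < 1 + α) : MeasureTheory.IntegrableOn (doubleSineKernel α x) (Set.Ioi 0) := by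
  have hc := continuousOn_doubleSineKernel hα x
  have ha : |1 + α - 2 * x| < 1 + α := by rw [abs_lt]; constructor <;> linarith
  rw [← Set.Ioc_union_Ioi_eq_Ioi (show (0 : ℝ) ≤ 1 / 2 by norm_num)]
  refine MeasureTheory.IntegrableOn.union ?_ ?_
  · refine MeasureTheory.IntegrableOn.of_bound (by simp) ?_ (36 / α ^ 2) ?_
    · exact (hc.mono Set.Ioc_subset_Ioi_self).aestronglyMeasurable measurableSet_Ioc
    · refine (MeasureTheory.ae_restrict_mem measurableSet_Ioc).mono fun t ht => ?_
      exact abs_doubleSineKernel_le_of_le hα hα1 hx hx1 ht.1 ht.2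
  · have hi : MeasureTheory.IntegrableOn (fun t : ℝ =>
        (4 + 2 / α) * Real.exp (-(1 + α - |1 + α - 2 * x|) * t)
          + 1 / α * t ^ (-2 : ℝ)) (Set.Ioi (1 / 2)) :=
      ((integrableOn_exp_mul_Ioi (by linarith) _).const_mul _).add
        ((integrableOn_Ioi_rpow_of_lt (by norm_num) (by norm_num)).const_mul _)
    refine MeasureTheory.Integrable.mono' hi ?_ ?_
    · exact (hc.mono (Set.Ioi_subset_Ioi (by norm_num))).aestronglyMeasurable measurableSet_Ioi
    · refine (MeasureTheory.ae_restrict_mem measurableSet_Ioi).mono fun t ht => ?_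
      exact abs_doubleSineKernel_le_of_ge hα hα1 hx hx1 (le_of_lt ht)

lemma sineKernel_eq_doubleSineKernel_sub {α t : ℝ} (hα : 0 < α) (x : ℝ) (ht : 0 < t) :
    sineKernel x t = doubleSineKernel α (x + α) t - doubleSineKernel α x t := by
  have hC : Real.sinh t ≠ 0 := (Real.sinh_pos_iff.2 ht).ne'
  have hB : Real.sinh (α * t) ≠ 0 := (Real.sinh_pos_iff.2 (mul_pos hα ht)).ne'
  have h1 : Real.sinh ((1 + α - 2 * x) * t) - Real.sinh ((1 + α - 2 * (x + α)) * t)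
      = 2 * Real.cosh ((1 - 2 * x) * t) * Real.sinh (α * t) := by
    rw [show (1 + α - 2 * x) * t = (1 - 2 * x) * t + α * t by ring,
      show (1 + α - 2 * (x + α)) * t = (1 - 2 * x) * t - α * t by ring,
      Real.sinh_add, Real.sinh_sub]
    ring
  have h2 : Real.sinh ((1 + α - 2 * x) * t)
      = Real.sinh ((1 + α - 2 * (x + α)) * t)
        + 2 * Real.cosh ((1 - 2 * x) * t) * Real.sinh (α * t) := by linarith
  unfold sineKernel doubleSineKernel
  rw [h2]
  field_simp
  ring

lemma mul_sineKernel_eq_doubleSineKernel_sub {α t : ℝ} (hα : 0 < α) (x : ℝ) (ht : 0 < t) :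
    α * sineKernel (x / α) (α * t) = doubleSineKernel α (x + 1) t - doubleSineKernel α x t := by
  have hC : Real.sinh t ≠ 0 := (Real.sinh_pos_iff.2 ht).ne'
  have hB : Real.sinh (α * t) ≠ 0 := (Real.sinh_pos_iff.2 (mul_pos hα ht)).ne'
  have h0 : (1 - 2 * (x / α)) * (α * t) = (α - 2 * x) * t := by field_simp
  have h1 : Real.sinh ((1 + α - 2 * x) * t)
      = Real.sinh ((1 + α - 2 * (x + 1)) * t)
        + 2 * Real.cosh ((α - 2 * x) * t) * Real.sinh t := by
    rw [show (1 + α - 2 * x) * t = (α - 2 * x) * t + t by ring,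
      show (1 + α - 2 * (x + 1)) * t = (α - 2 * x) * t - t by ring,
      Real.sinh_add, Real.sinh_sub]
    ring
  unfold sineKernel doubleSineKernel
  rw [h0, h1]
  field_simp
  ring

lemma integrableOn_sineKernel {x : ℝ} (hx : 0 < x) (hx1 : x < 1) :
    MeasureTheory.IntegrableOn (sineKernel x) (Set.Ioi 0) := by
  refine MeasureTheory.IntegrableOn.congr_fun
    ((integrableOn_doubleSineKernel one_pos le_rfl (x := x + 1) (by linarith) (by linarith)).sub
      (integrableOn_doubleSineKernel one_pos le_rfl hx (by linarith))) (fun t ht => ?_)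
    measurableSet_Ioi
  exact (sineKernel_eq_doubleSineKernel_sub one_pos x ht).symm

lemma integral_sineKernel_one_sub (x : ℝ) :
    ∫ t in Set.Ioi 0, sineKernel (1 - x) t = ∫ t in Set.Ioi 0, sineKernel x t := by
  congr 1
  ext t
  unfold sineKernel
  rw [show (1 - 2 * (1 - x)) * t = -((1 - 2 * x) * t) by ring, Real.cosh_neg]

lemma two_mul_integral_sineKernel_quarter :
    2 * ∫ t in Set.Ioi 0, sineKernel (1 / 4) t = ∫ t in Set.Ioi 0, sineKernel (1 / 2) t := by
  have h := MeasureTheory.integral_comp_mul_left_Ioi (sineKernel (1 / 2)) 0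
    (show (0 : ℝ) < 1 / 2 by norm_num)
  rw [mul_zero, smul_eq_mul] at h
  have h2 : ∫ t in Set.Ioi 0, sineKernel (1 / 4) t
      = ∫ t in Set.Ioi 0, 1 / 4 * sineKernel (1 / 2) (1 / 2 * t) := by
    refine MeasureTheory.setIntegral_congr_fun measurableSet_Ioi fun t ht => ?_
    have hs : Real.sinh (t / 2) ≠ 0 := (Real.sinh_pos_iff.2 (half_pos ht)).ne'
    have hc : Real.cosh (t / 2) ≠ 0 := (Real.cosh_pos _).ne'
    have ht' : t ≠ 0 := ne_of_gt ht
    have h3 : Real.sinh t = 2 * Real.sinh (t / 2) * Real.cosh (t / 2) := by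
      rw [← Real.sinh_two_mul]; congr 1; ring
    simp only [sineKernel]
    rw [h3, show (1 - 2 * (1 / 4 : ℝ)) * t = t / 2 by ring, show 1 / 2 * t = t / 2 by ring]
    norm_num
    field_simp
    ring
  rw [h2, MeasureTheory.integral_const_mul, h]
  ring

lemma hasDerivAt_sineKernel (t : ℝ) (ht : 0 < t) (x : ℝ) :
    HasDerivAt (fun x => sineKernel x t) (2 * Real.sinh ((1 - 2 * x) * t) / Real.sinh t) x := by
  unfold sineKernel
  have h1 : HasDerivAt (fun x : ℝ => (1 - 2 * x) * t) (-2 * t) x := by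
    simpa using (((hasDerivAt_id x).const_mul 2).const_sub 1).mul_const t
  have h2 := (((h1.cosh).div_const (Real.sinh t)).const_sub (1 / t)).div_const t
  have : Real.sinh t ≠ 0 := (Real.sinh_pos_iff.2 ht).ne'
  exact h2.congr_deriv (by field_simp)

lemma norm_two_mul_sinh_div_sinh_le {δ b t : ℝ} (hb : |b| ≤ 1 - δ) (hδ : 0 < δ) (ht : 0 < t) :
    ‖2 * Real.sinh (b * t) / Real.sinh t‖ ≤ 2 * Real.exp (-δ * t) := by
  have hC : 0 < Real.sinh t := Real.sinh_pos_iff.2 ht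
  have h := abs_sinh_mul_le (show |b| ≤ 1 by linarith) ht.le
  rw [one_mul] at h
  rw [Real.norm_eq_abs, abs_div, abs_of_pos hC, div_le_iff₀ hC, abs_mul, abs_two, mul_assoc]
  have h2 : Real.exp (-(1 - |b|) * t) ≤ Real.exp (-δ * t) := Real.exp_le_exp.2 (by nlinarith)
  have := h.trans (mul_le_mul_of_nonneg_right h2 hC.le)
  linarith

lemma hasDerivAt_integral_sineKernel {x : ℝ} (hx : 0 < x) (hx1 : x < 1) :
    HasDerivAt (fun x => ∫ t in Set.Ioi 0, sineKernel x t)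
      (∫ t in Set.Ioi 0, 2 * Real.sinh ((1 - 2 * x) * t) / Real.sinh t) x := by
  obtain ⟨δ, hδ, hδx, hδ1⟩ : ∃ δ, 0 < δ ∧ δ < x ∧ x < 1 - δ := by
    refine ⟨min x (1 - x) / 2, ?_, ?_, ?_⟩ <;>
      rcases min_cases x (1 - x) with ⟨h, _⟩ | ⟨h, _⟩ <;> rw [h] <;> linarith
  refine (hasDerivAt_integral_of_dominated_loc_of_deriv_le
    (μ := MeasureTheory.volume.restrict (Set.Ioi 0)) (F := sineKernel)
    (F' := fun x t => 2 * Real.sinh ((1 - 2 * x) * t) / Real.sinh t)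
    (s := Set.Ioo δ (1 - δ)) (bound := fun t => 2 * Real.exp (-(2 * δ) * t))
    (Ioo_mem_nhds hδx hδ1) ?_ (integrableOn_sineKernel hx hx1) ?_ ?_ ?_ ?_).2
  · filter_upwards [Ioo_mem_nhds hx hx1] with y hy
    exact (integrableOn_sineKernel hy.1 hy.2).1
  · refine ContinuousOn.aestronglyMeasurable ?_ measurableSet_Ioi
    have hs := Real.continuous_sinh
    refine ContinuousOn.div (Continuous.continuousOn (by fun_prop))
      (Continuous.continuousOn (by fun_prop)) fun t ht => (Real.sinh_pos_iff.2 ht).ne'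
  · refine (MeasureTheory.ae_restrict_mem measurableSet_Ioi).mono fun t ht y hy => ?_
    refine norm_two_mul_sinh_div_sinh_le ?_ (by linarith) ht
    rw [abs_le]
    constructor <;> linarith [hy.1, hy.2]
  · exact (integrableOn_exp_mul_Ioi (by linarith) _).const_mul _
  · exact (MeasureTheory.ae_restrict_mem measurableSet_Ioi).mono fun t ht y _ =>
      hasDerivAt_sineKernel t ht y

lemma hasSum_one_div_sub_one_div {x : ℝ} (hx : 0 < x) (hx1 : x ≤ 1 / 2) :
    HasSum (fun n : ℕ => 1 / (n + x) - 1 / (n + 1 - x)) (Real.pi * Real.cot (Real.pi * x)) := by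
  have hc : (x : ℂ) ∈ Complex.integerComplement := by
    rintro ⟨m, hm⟩
    have hm' : (m : ℝ) = x := by exact_mod_cast hm
    have h1 : (0 : ℝ) < m := by linarith
    have h2 : (m : ℝ) < 1 := by linarith
    norm_cast at h1 h2
    omega
  have ht := tendsto_logDeriv_euler_cot_sub hc
  have ht' : Tendsto (fun n : ℕ => ∑ j ∈ Finset.range n, (1 / (x - (j + 1)) + 1 / (x + (j + 1))))
      atTop (nhds (Real.pi * Real.cot (Real.pi * x) - 1 / x)) := by
    have := (Complex.continuous_re.tendsto _).comp ht
    convert this using 2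
    · simp only [Function.comp, cotTerm, Complex.re_sum]
      refine Finset.sum_congr rfl fun j _ => ?_
      norm_cast
    · rw [← Complex.ofReal_mul, ← Complex.ofReal_cot]
      norm_cast
  rw [hasSum_iff_tendsto_nat_of_nonneg]
  · have hlim : Tendsto (fun n : ℕ => 1 / ((n : ℝ) + x)) atTop (nhds 0) := by
      simp_rw [one_div]
      exact tendsto_inv_atTop_zero.comp
        (tendsto_atTop_add_const_right _ x tendsto_natCast_atTop_atTop)
    have h := (ht'.add_const (1 / x)).sub hlim
    rw [sub_add_cancel, sub_zero] at h
    refine h.congr fun n => ?_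
    induction n with
    | zero => simp
    | succ n ih =>
      rw [Finset.sum_range_succ, Finset.sum_range_succ, ← ih]
      have e : (x - ((n : ℝ) + 1)) = -((n : ℝ) + 1 - x) := by ring
      push_cast
      rw [e, show (n : ℝ) + 1 + x = x + (n + 1) by ring, one_div_neg_eq_neg_one_div]
      ring
  · intro n
    have : (0 : ℝ) ≤ n := n.cast_nonneg
    rw [sub_nonneg]
    exact one_div_le_one_div_of_le (by linarith) (by linarith)

lemma integral_two_mul_sinh_div_sinh {x : ℝ} (hx : 0 < x) (hx1 : x ≤ 1 / 2) :
    ∫ t in Set.Ioi 0, 2 * Real.sinh ((1 - 2 * x) * t) / Real.sinh t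
      = Real.pi * Real.cot (Real.pi * x) := by
  have hint : ∀ c : ℝ, 0 < c →
      MeasureTheory.IntegrableOn (fun t => 2 * Real.exp (-(2 * c) * t)) (Set.Ioi 0) :=
    fun c hc => (integrableOn_exp_mul_Ioi (by linarith) _).const_mul _
  have hval : ∀ c : ℝ, 0 < c → ∫ t in Set.Ioi 0, 2 * Real.exp (-(2 * c) * t) = 1 / c := by
    intro c hc
    rw [MeasureTheory.integral_const_mul, integral_exp_mul_Ioi (by linarith), mul_zero,
      Real.exp_zero]
    field_simp
  have hpos : ∀ n : ℕ, 0 < (n : ℝ) + x ∧ 0 < (n : ℝ) + 1 - x := fun n => by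
    have : (0 : ℝ) ≤ n := n.cast_nonneg
    constructor <;> linarith
  set F : ℕ → ℝ → ℝ := fun n t =>
    2 * Real.exp (-(2 * (n + x)) * t) - 2 * Real.exp (-(2 * (n + 1 - x)) * t) with hF
  have hFint : ∀ n, MeasureTheory.IntegrableOn (F n) (Set.Ioi 0) := fun n =>
    (hint _ (hpos n).1).sub (hint _ (hpos n).2)
  have hFval : ∀ n, ∫ t in Set.Ioi 0, F n t = 1 / (n + x) - 1 / (n + 1 - x) := fun n => by
    rw [hF]
    simp only
    rw [MeasureTheory.integral_sub (hint _ (hpos n).1) (hint _ (hpos n).2), hval _ (hpos n).1,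
      hval _ (hpos n).2]
  have hFnorm : ∀ n, ∫ t in Set.Ioi 0, ‖F n t‖ = 1 / (n + x) - 1 / (n + 1 - x) := fun n => by
    rw [← hFval n]
    refine MeasureTheory.setIntegral_congr_fun measurableSet_Ioi fun t ht => ?_
    refine Real.norm_of_nonneg (sub_nonneg.2 ?_)
    have ht' : (0 : ℝ) < t := ht
    gcongr
    linarith
  have hS := hasSum_one_div_sub_one_div hx hx1
  have h := MeasureTheory.hasSum_integral_of_summable_integral_norm hFint
    (by simpa only [hFnorm] using hS.summable)
  simp only [hFval] at h
  rw [hS.unique h]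
  refine MeasureTheory.setIntegral_congr_fun measurableSet_Ioi fun t ht => ?_
  have ht' : (0 : ℝ) < t := ht
  have hq : Real.exp (-(2 * t)) < 1 := by
    rw [Real.exp_lt_one_iff]; linarith
  have hg := (hasSum_geometric_of_lt_one (Real.exp_pos _).le hq).mul_left
    (2 * (Real.exp (-(2 * x) * t) - Real.exp (-(2 * (1 - x)) * t)))
  have hFe : ∀ n, F n t = 2 * (Real.exp (-(2 * x) * t) - Real.exp (-(2 * (1 - x)) * t))
      * Real.exp (-(2 * t)) ^ n := fun n => by
    rw [hF, ← Real.exp_nat_mul]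
    simp only
    rw [show -(2 * ((n : ℝ) + x)) * t = -(2 * x) * t + n * -(2 * t) by ring,
      show -(2 * ((n : ℝ) + 1 - x)) * t = -(2 * (1 - x)) * t + n * -(2 * t) by ring,
      Real.exp_add, Real.exp_add]
    ring
  simp only [hFe]
  rw [hg.tsum_eq, Real.sinh_eq, Real.sinh_eq]
  have e1 : Real.exp (-(2 * x) * t) = Real.exp ((1 - 2 * x) * t) * Real.exp (-t) := by
    rw [← Real.exp_add]; congr 1; ring
  have e2 : Real.exp (-(2 * (1 - x)) * t) = Real.exp (-((1 - 2 * x) * t)) * Real.exp (-t) := by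
    rw [← Real.exp_add]; congr 1; ring
  have e3 : Real.exp (-(2 * t)) = Real.exp (-t) * Real.exp (-t) := by
    rw [← Real.exp_add]; congr 1; ring
  have e4 : Real.exp t * Real.exp (-t) = 1 := by rw [← Real.exp_add]; simp
  have e5 : Real.exp t - Real.exp (-t) ≠ 0 := by
    have : Real.exp (-t) < Real.exp t := Real.exp_lt_exp.2 (by linarith)
    exact (sub_pos.2 this).ne'
  have e6 : 1 - Real.exp (-(2 * t)) = Real.exp (-t) * (Real.exp t - Real.exp (-t)) := by
    rw [e3, mul_sub, mul_comm (Real.exp (-t)) (Real.exp t), e4]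
  have e7 : Real.exp (-t) ≠ 0 := (Real.exp_pos _).ne'
  rw [e6, e1, e2]
  field_simp

theorem integral_sineKernel {x : ℝ} (hx : 0 < x) (hx1 : x < 1) :
    ∫ t in Set.Ioi 0, sineKernel x t = Real.log (2 * Real.sin (Real.pi * x)) := by
  set D : ℝ → ℝ := fun x =>
    (∫ t in Set.Ioi 0, sineKernel x t) - Real.log (2 * Real.sin (Real.pi * x)) with hD
  have hsin : ∀ x : ℝ, 0 < x → x < 1 → 0 < Real.sin (Real.pi * x) := fun x h0 h1 =>
    Real.sin_pos_of_pos_of_lt_pi (by positivity) (by nlinarith [Real.pi_pos])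
  have hder : ∀ y : ℝ, 0 < y → y ≤ 1 / 2 → HasDerivAt D 0 y := by
    intro y hy hy1
    have h1 := hasDerivAt_integral_sineKernel hy (by linarith)
    rw [integral_two_mul_sinh_div_sinh hy hy1] at h1
    have h2 : HasDerivAt (fun x : ℝ => Real.pi * x) Real.pi y := by
      simpa using (hasDerivAt_id y).const_mul Real.pi
    have hne := (hsin y hy (by linarith)).ne'
    have h3 := (h2.sin.const_mul 2).log (by positivity)
    refine (h1.sub h3).congr_deriv ?_
    rw [Real.cot_eq_cos_div_sin]
    field_simp
    ring
  have hconst : ∀ y : ℝ, 0 < y → y ≤ 1 / 2 → D y = D (1 / 2) := by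
    intro y hy hy1
    refine (constant_of_has_deriv_right_zero (a := y) (b := 1 / 2) (fun z hz => ?_)
      (fun z hz => ?_) (1 / 2) ⟨hy1, le_rfl⟩).symm
    · exact (hder z (by linarith [hz.1]) hz.2).continuousAt.continuousWithinAt
    · exact (hder z (by linarith [hz.1]) hz.2.le).hasDerivWithinAt
  have hzero : D (1 / 2) = 0 := by
    have h := hconst (1 / 4) (by norm_num) (by norm_num)
    have hq := two_mul_integral_sineKernel_quarter
    have hs2 : Real.sin (Real.pi * (1 / 2)) = 1 := by
      rw [mul_one_div, Real.sin_pi_div_two]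
    have hl : Real.log (2 * Real.sin (Real.pi * (1 / 4))) = 1 / 2 * Real.log 2 := by
      rw [mul_one_div, Real.sin_pi_div_four, mul_div_cancel₀ _ two_ne_zero, Real.log_sqrt (by norm_num)]
      ring
    simp only [hD] at h ⊢
    rw [hl, hs2, mul_one] at h
    rw [hs2, mul_one]
    linarith
  have hle : ∀ y : ℝ, 0 < y → y ≤ 1 / 2 →
      ∫ t in Set.Ioi 0, sineKernel y t = Real.log (2 * Real.sin (Real.pi * y)) := by
    intro y hy hy1
    have := (hconst y hy hy1).trans hzero
    exact sub_eq_zero.1 this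
  rcases le_total x (1 / 2) with h | h
  · exact hle x hx h
  · rw [← integral_sineKernel_one_sub, hle (1 - x) (by linarith) (by linarith), mul_sub, mul_one,
      Real.sin_pi_sub]

/-- Minus the logarithm of the double sine function with periods `1` and `α`, normalised to vanish
at `(1 + α) / 2`. -/
noncomputable def logDoubleSine (α x : ℝ) : ℝ := ∫ t in Set.Ioi 0, doubleSineKernel α x t

lemma logDoubleSine_add_period {α x : ℝ} (hα : 0 < α) (hα1 : α ≤ 1) (hx : 0 < x) (hx1 : x < 1) :
    logDoubleSine α (x + α) = logDoubleSine α x + Real.log (2 * Real.sin (Real.pi * x)) := by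
  rw [← integral_sineKernel hx hx1, MeasureTheory.setIntegral_congr_fun measurableSet_Ioi
    (fun t ht => sineKernel_eq_doubleSineKernel_sub hα x ht),
    MeasureTheory.integral_sub
      (integrableOn_doubleSineKernel hα hα1 (by linarith) (by linarith))
      (integrableOn_doubleSineKernel hα hα1 hx (by linarith))]
  unfold logDoubleSine
  ring

lemma logDoubleSine_add_one {α x : ℝ} (hα : 0 < α) (hα1 : α ≤ 1) (hx : 0 < x) (hx1 : x < α) :
    logDoubleSine α (x + 1) = logDoubleSine α x + Real.log (2 * Real.sin (Real.pi * (x / α))) := by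
  have h := MeasureTheory.integral_comp_mul_left_Ioi (sineKernel (x / α)) 0 hα
  rw [mul_zero, smul_eq_mul, integral_sineKernel (by positivity) ((div_lt_one hα).2 hx1)] at h
  have h2 : ∫ t in Set.Ioi 0, α * sineKernel (x / α) (α * t)
      = ∫ t in Set.Ioi 0, (doubleSineKernel α (x + 1) t - doubleSineKernel α x t) :=
    MeasureTheory.setIntegral_congr_fun measurableSet_Ioi
      (fun t ht => mul_sineKernel_eq_doubleSineKernel_sub hα x ht)
  rw [MeasureTheory.integral_const_mul, h, MeasureTheory.integral_sub
      (integrableOn_doubleSineKernel hα hα1 (by linarith) (by linarith))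
      (integrableOn_doubleSineKernel hα hα1 hx (by linarith)), mul_inv_cancel_left₀ hα.ne'] at h2
  unfold logDoubleSine
  linarith

lemma logDoubleSine_reflect (α x : ℝ) :
    logDoubleSine α (1 + α - x) = -logDoubleSine α x := by
  unfold logDoubleSine
  rw [← MeasureTheory.integral_neg]
  congr 1
  ext t
  unfold doubleSineKernel
  rw [show 1 + α - 2 * (1 + α - x) = -(1 + α - 2 * x) by ring, neg_mul, Real.sinh_neg]
  ring

lemma convexOn_sinh : ConvexOn ℝ (Set.Ici 0) Real.sinh := by
  refine MonotoneOn.convexOn_of_deriv (convex_Ici 0) Real.continuous_sinh.continuousOn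
    Real.differentiable_sinh.differentiableOn ?_
  rw [interior_Ici, Real.deriv_sinh]
  intro a ha b hb hab
  rw [Real.cosh_le_cosh, abs_of_pos ha, abs_of_pos hb]
  exact hab

lemma convexOn_logDoubleSine {α : ℝ} (hα : 0 < α) (hα1 : α ≤ 1) :
    ConvexOn ℝ (Set.Ioc 0 ((1 + α) / 2)) (logDoubleSine α) := by
  refine ⟨convex_Ioc _ _, fun x hx y hy a b ha hb hab => ?_⟩
  have hz := convex_Ioc (0 : ℝ) ((1 + α) / 2) hx hy ha hb hab
  have hint : ∀ z ∈ Set.Ioc 0 ((1 + α) / 2),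
      MeasureTheory.IntegrableOn (doubleSineKernel α z) (Set.Ioi 0) := fun z hz =>
    integrableOn_doubleSineKernel hα hα1 hz.1 (by linarith [hz.2])
  simp only [smul_eq_mul] at hz ⊢
  unfold logDoubleSine
  rw [← MeasureTheory.integral_const_mul, ← MeasureTheory.integral_const_mul,
    ← MeasureTheory.integral_add ((hint x hx).const_mul a) ((hint y hy).const_mul b)]
  refine MeasureTheory.setIntegral_mono_on (hint _ hz)
    (((hint x hx).const_mul a).add ((hint y hy).const_mul b)) measurableSet_Ioi fun t ht => ?_
  have ht' : (0 : ℝ) < t := ht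
  have hC : 0 < Real.sinh t := Real.sinh_pos_iff.2 ht
  have hB : 0 < Real.sinh (α * t) := Real.sinh_pos_iff.2 (by positivity)
  have hb' : b = 1 - a := by linarith
  have hs := convexOn_sinh.2 (x := (1 + α - 2 * x) * t) (y := (1 + α - 2 * y) * t)
    (mul_nonneg (by linarith [hx.2]) ht'.le) (mul_nonneg (by linarith [hy.2]) ht'.le) ha hb hab
  simp only [smul_eq_mul] at hs
  rw [show a * ((1 + α - 2 * x) * t) + b * ((1 + α - 2 * y) * t)
    = (1 + α - 2 * (a * x + b * y)) * t by rw [hb']; ring] at hs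
  unfold doubleSineKernel
  have hs2 := div_le_div_of_nonneg_right hs (mul_pos hC hB).le
  have e : (1 + α - 2 * (a * x + b * y)) / (α * t)
      = a * ((1 + α - 2 * x) / (α * t)) + b * ((1 + α - 2 * y) / (α * t)) := by
    rw [hb']; ring
  calc _ ≤ ((a * Real.sinh ((1 + α - 2 * x) * t) + b * Real.sinh ((1 + α - 2 * y) * t))
        / (Real.sinh t * Real.sinh (α * t))
        - (1 + α - 2 * (a * x + b * y)) / (α * t)) / (2 * t) := by gcongr
    _ = _ := by rw [e]; ring

lemma ConvexOn.sub_mul_le {s : Set ℝ} {f : ℝ → ℝ} (hf : ConvexOn ℝ s f) {a b c : ℝ} (ha : a ∈ s)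
    (hc : c ∈ s) (hab : a ≤ b) (hbc : b ≤ c) :
    (c - a) * f b ≤ (c - b) * f a + (b - a) * f c := by
  rcases (hab.trans hbc).eq_or_lt with h | h
  · have : b = a := le_antisymm (by linarith) hab
    subst h this
    simp
  · have hpos : 0 < c - a := sub_pos.2 h
    have := hf.2 ha hc (div_nonneg (sub_nonneg.2 hbc) hpos.le)
      (div_nonneg (sub_nonneg.2 hab) hpos.le)
      (show (c - b) / (c - a) + (b - a) / (c - a) = 1 by field_simp; ring)
    simp only [smul_eq_mul] at this
    rw [show (c - b) / (c - a) * a + (b - a) / (c - a) * c = b by field_simp; ring] at this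
    calc _ ≤ (c - a) * ((c - b) / (c - a) * f a + (b - a) / (c - a) * f c) := by gcongr
      _ = _ := by field_simp

/-- The logarithm of the Sudler product `∏_{j=1}^n |2 sin(πjα)|`. -/
noncomputable def logSudler (α : ℝ) (n : ℕ) : ℝ :=
  ∑ j ∈ Finset.Icc 1 n, Real.log (2 * Real.sin (Real.pi * (j * α)))

lemma logSudler_zero (α : ℝ) : logSudler α 0 = 0 := by simp [logSudler]

lemma logSudler_succ (α : ℝ) (n : ℕ) : logSudler α (n + 1)
    = logSudler α n + Real.log (2 * Real.sin (Real.pi * ((n + 1) * α))) := by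
  unfold logSudler
  rw [Finset.sum_Icc_succ_top (by omega)]
  push_cast
  rfl

lemma log_two_mul_sin_int_add (k : ℤ) (y : ℝ) :
    Real.log (2 * Real.sin (Real.pi * (k + y))) = Real.log (2 * Real.sin (Real.pi * y)) := by
  rw [show Real.pi * (k + y) = Real.pi * y + k * Real.pi by ring, Real.sin_add_int_mul_pi]
  rcases Int.even_or_odd k with h | h
  · rw [h.neg_one_zpow, one_mul]
  · rw [h.neg_one_zpow, neg_one_mul, mul_neg, Real.log_neg_eq_log]

lemma log_two_mul_sin_int_sub (k : ℤ) (y : ℝ) :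
    Real.log (2 * Real.sin (Real.pi * (k - y))) = Real.log (2 * Real.sin (Real.pi * y)) := by
  rw [sub_eq_add_neg, log_two_mul_sin_int_add, mul_neg, Real.sin_neg, mul_neg,
    Real.log_neg_eq_log]

/-- Renormalisation of golden Sudler products. -/
theorem logSudler_sub_logSudler {α : ℝ} (hα : 0 < α) (hg : α ^ 2 + α = 1) (hirr : Irrational α)
    (N : ℕ) : ∀ (M : ℕ) (y : ℝ), 0 < y → y < 1 → (N + 1) * α = M + y →
      logSudler α N - logSudler α M = logDoubleSine α y - logDoubleSine α α := by
  have hα1 : α < 1 := by nlinarith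
  have hαh : 1 < 2 * α := by nlinarith
  induction N with
  | zero =>
    intro M y hy hy1 h
    have hM : M = 0 := by
      by_contra hne
      have : (1 : ℝ) ≤ M := by exact_mod_cast Nat.one_le_iff_ne_zero.2 hne
      push_cast at h
      linarith
    subst hM
    push_cast at h
    rw [show y = α by linarith]
    ring
  | succ N ih =>
    intro M y hy hy1 h
    push_cast at h
    rcases lt_trichotomy y α with hlt | heq | hgt
    · have hM : M ≠ 0 := by
        rintro rfl
        have : (0 : ℝ) ≤ N := N.cast_nonneg
        push_cast at h
        nlinarith
      obtain ⟨m, rfl⟩ := Nat.exists_eq_succ_of_ne_zero hM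
      simp only [Nat.succ_eq_add_one] at h ⊢
      push_cast at h
      have hprev : ((N : ℝ) + 1) * α = m + (y + 1 - α) := by linarith
      have h1 := ih m (y + 1 - α) (by linarith) (by linarith) hprev
      have h2 := logDoubleSine_add_period hα hα1.le (x := y + 1 - α) (by linarith) (by linarith)
      have h3 := logDoubleSine_add_one hα hα1.le hy hlt
      have e1 : ((N : ℝ) + 1) * α = ((m : ℤ) : ℝ) + (y + 1 - α) := by exact_mod_cast hprev
      have e2 : ((m : ℝ) + 1) * α = (((N : ℤ) + 1 - m : ℤ) : ℝ) - y / α := by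
        push_cast
        field_simp
        nlinarith
      rw [logSudler_succ, logSudler_succ, e1, e2, log_two_mul_sin_int_add,
        log_two_mul_sin_int_sub]
      rw [show y + 1 - α + α = y + 1 by ring] at h2
      linarith
    · exfalso
      have h1 : ((N : ℝ) + 1) * α = M := by linarith
      have h2 := hirr.natCast_mul (m := N + 1) (by omega)
      apply h2.ne_nat M
      push_cast
      exact h1
    · have hprev : ((N : ℝ) + 1) * α = M + (y - α) := by linarith
      have h1 := ih M (y - α) (by linarith) (by linarith) hprev
      have h2 := logDoubleSine_add_period hα hα1.le (x := y - α) (by linarith) (by linarith)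
      have e1 : ((N : ℝ) + 1) * α = ((M : ℤ) : ℝ) + (y - α) := by exact_mod_cast hprev
      rw [logSudler_succ, e1, log_two_mul_sin_int_add]
      rw [sub_add_cancel] at h2
      linarith

/-- The increment of `logSudler` under renormalisation, as a function of the fractional part. -/
noncomputable def renormIncrement (α y : ℝ) : ℝ := logDoubleSine α y - logDoubleSine α α

section golden

variable {α : ℝ}

lemma golden_bounds (hα : 0 < α) (hg : α ^ 2 + α = 1) : 3 / 5 < α ∧ α < 2 / 3 := by
  constructor <;> nlinarith

lemma convexOn_renormIncrement (hα : 0 < α) (hα1 : α ≤ 1) :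
    ConvexOn ℝ (Set.Ioc 0 ((1 + α) / 2)) (renormIncrement α) := by
  have h := (convexOn_logDoubleSine hα hα1).add_const (-logDoubleSine α α)
  exact h

lemma renormIncrement_self : renormIncrement α α = 0 := sub_self _

lemma renormIncrement_two_mul_sub_one (hα : 0 < α) (hg : α ^ 2 + α = 1) (hirr : Irrational α) :
    renormIncrement α (2 * α - 1) = 0 := by
  have hb := golden_bounds hα hg
  have h := logSudler_sub_logSudler hα hg hirr 1 1 (2 * α - 1) (by linarith) (by linarith)
    (by push_cast; ring)
  rw [sub_self] at h
  exact h.symm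

lemma renormIncrement_reflect (y : ℝ) : renormIncrement α y
    = 2 * renormIncrement α ((1 + α) / 2) - renormIncrement α (1 + α - y) := by
  have h1 := logDoubleSine_reflect α ((1 + α) / 2)
  rw [show 1 + α - (1 + α) / 2 = (1 + α) / 2 by ring] at h1
  have h2 := logDoubleSine_reflect α y
  unfold renormIncrement
  rw [h2]
  linarith

lemma renormIncrement_half_nonneg (hα : 0 < α) (hg : α ^ 2 + α = 1) (hirr : Irrational α) :
    0 ≤ renormIncrement α ((1 + α) / 2) := by
  have hb := golden_bounds hα hg
  have h := (convexOn_renormIncrement hα (by linarith)).sub_mul_le (a := 2 * α - 1) (b := α)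
    (c := (1 + α) / 2) ⟨by linarith, by linarith⟩ ⟨by linarith, by linarith⟩ (by linarith)
    (by linarith)
  rw [renormIncrement_self, renormIncrement_two_mul_sub_one hα hg hirr, mul_zero, mul_zero,
    zero_add] at h
  exact nonneg_of_mul_nonneg_right h (by linarith)

lemma renormIncrement_nonpos (hα : 0 < α) (hg : α ^ 2 + α = 1) (hirr : Irrational α) {y : ℝ}
    (hy : 2 * α - 1 ≤ y) (hy1 : y ≤ α) : renormIncrement α y ≤ 0 := by
  have hb := golden_bounds hα hg
  have h := (convexOn_renormIncrement hα (by linarith)).sub_mul_le (a := 2 * α - 1) (b := y)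
    (c := α) ⟨by linarith, by linarith⟩ ⟨by linarith, by linarith⟩ hy hy1
  rw [renormIncrement_self, renormIncrement_two_mul_sub_one hα hg hirr, mul_zero, mul_zero,
    zero_add] at h
  exact nonpos_of_mul_nonpos_right h (by linarith)

lemma renormIncrement_le_of_mem_Icc (hα : 0 < α) (hg : α ^ 2 + α = 1) {y : ℝ}
    (hy : α ≤ y) (hy1 : y ≤ (1 + α) / 2) :
    (1 - α) * renormIncrement α y ≤ 2 * (y - α) * renormIncrement α ((1 + α) / 2) := by
  have hb := golden_bounds hα hg
  have h := (convexOn_renormIncrement hα (by linarith)).sub_mul_le (a := α) (b := y)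
    (c := (1 + α) / 2) ⟨by linarith, by linarith⟩ ⟨by linarith, by linarith⟩ hy hy1
  rw [renormIncrement_self, mul_zero, zero_add] at h
  linarith

lemma renormIncrement_nonneg (hα : 0 < α) (hg : α ^ 2 + α = 1) (hirr : Irrational α) {y : ℝ}
    (hy : 0 < y) (hy1 : y < 1) (hout : y ≤ 2 * α - 1 ∨ α ≤ y) : 0 ≤ renormIncrement α y := by
  have hb := golden_bounds hα hg
  have hconv := convexOn_renormIncrement hα (by linarith)
  have hκ := renormIncrement_half_nonneg hα hg hirr
  have hp := renormIncrement_two_mul_sub_one hα hg hirr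
  rcases hout with hle | hge
  · have h := hconv.sub_mul_le (a := y) (b := 2 * α - 1)
      (c := α) ⟨by linarith, by linarith⟩ ⟨by linarith, by linarith⟩ (by linarith) (by linarith)
    rw [renormIncrement_self, hp, mul_zero, mul_zero, add_zero] at h
    exact nonneg_of_mul_nonneg_right h (by linarith)
  · rcases le_or_gt y ((1 + α) / 2) with hh | hh
    · have h := hconv.sub_mul_le (a := 2 * α - 1) (b := α)
        (c := y) ⟨by linarith, by linarith⟩ ⟨by linarith, by linarith⟩ (by linarith) (by linarith)
      rw [renormIncrement_self, hp, mul_zero, mul_zero, zero_add] at h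
      exact nonneg_of_mul_nonneg_right h (by linarith)
    · rw [renormIncrement_reflect]
      have h := renormIncrement_le_of_mem_Icc hα hg (y := 1 + α - y) (by linarith) (by linarith)
      have h2 : 2 * (1 + α - y - α) * renormIncrement α ((1 + α) / 2)
          ≤ (1 - α) * renormIncrement α ((1 + α) / 2) := by
        gcongr
        linarith
      have h3 := le_of_mul_le_mul_left (h.trans h2) (by linarith)
      linarith

/-- A negative increment is compensated by the next one. -/
lemma renormIncrement_add_nonneg (hα : 0 < α) (hg : α ^ 2 + α = 1) (hirr : Irrational α)
    {y z : ℝ} (hy : 2 * α - 1 < y) (hy1 : y < α) (hz : 0 < z) (hz1 : z < 1)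
    (hyz : z = α - y * (1 + α) ∨ z = 1 + α - y * (1 + α)) :
    0 ≤ renormIncrement α y + renormIncrement α z := by
  have hb := golden_bounds hα hg
  have hconv := convexOn_renormIncrement hα (by linarith)
  have hκ := renormIncrement_half_nonneg hα hg hirr
  have hp := renormIncrement_two_mul_sub_one hα hg hirr
  have hneg := renormIncrement_nonpos hα hg hirr hy.le hy1.le
  have hαneg : α * renormIncrement α y ≤ 0 := mul_nonpos_of_nonneg_of_nonpos hα.le hneg
  rcases hyz with hyz | hyz
  · have hzp : 2 * α - 1 - z = (1 + α) * (y - (2 * α - 1)) := by rw [hyz]; nlinarith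
    have hzlt : z < 2 * α - 1 := by nlinarith
    have h := hconv.sub_mul_le (a := z) (b := 2 * α - 1) (c := y) ⟨hz, by linarith⟩
      ⟨by linarith, by linarith⟩ hzlt.le hy.le
    rw [hp, hzp, mul_zero] at h
    have h2 : 0 ≤ (y - (2 * α - 1)) * (renormIncrement α z + (1 + α) * renormIncrement α y) := by
      linarith
    have h3 := nonneg_of_mul_nonneg_right h2 (by linarith)
    linarith
  · have hzp : z - α = (1 + α) * (α - y) := by rw [hyz]; nlinarith
    have hzgt : α < z := by nlinarith
    rcases le_or_gt z ((1 + α) / 2) with hh | hh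
    · have h := hconv.sub_mul_le (a := y) (b := α) (c := z) ⟨by linarith, by linarith⟩
        ⟨by linarith, by linarith⟩ hy1.le hzgt.le
      rw [renormIncrement_self, hzp, mul_zero] at h
      have h2 : 0 ≤ (α - y) * (renormIncrement α z + (1 + α) * renormIncrement α y) := by
        linarith
      have h3 := nonneg_of_mul_nonneg_right h2 (by linarith)
      linarith
    · have h1 := renormIncrement_le_of_mem_Icc hα hg (y := 1 + α - z) (by linarith) (by linarith)
      have h2 := renormIncrement_reflect (α := α) z
      have h3 := hconv.sub_mul_le (a := y) (b := α) (c := (1 + α) / 2) ⟨by linarith, by linarith⟩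
        ⟨by linarith, by linarith⟩ hy1.le (by linarith)
      rw [renormIncrement_self, mul_zero] at h3
      set κ := renormIncrement α ((1 + α) / 2)
      have h4 : 0 ≤ κ * (α * (α - y)) := mul_nonneg hκ (mul_nonneg hα.le (by linarith))
      have h5 : κ * (α * (α - y)) = κ * (z - α) - κ * (α - y) := by rw [hzp]; ring
      have h6 : 0 ≤ (1 - α) * (renormIncrement α y + renormIncrement α z) := by
        rw [h2]
        linarith
      exact nonneg_of_mul_nonneg_right h6 (by linarith)

lemma exists_natCast_add_eq_mul (hα : 0 < α) (hirr : Irrational α) (N : ℕ) :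
    ∃ (M : ℕ) (y : ℝ), 0 < y ∧ y < 1 ∧ ((N : ℝ) + 1) * α = M + y := by
  have h0 : 0 ≤ ((N : ℝ) + 1) * α := by positivity
  refine ⟨⌊((N : ℝ) + 1) * α⌋₊, ((N : ℝ) + 1) * α - ⌊((N : ℝ) + 1) * α⌋₊, ?_, ?_, by ring⟩
  · rw [sub_pos]
    refine lt_of_le_of_ne (Nat.floor_le h0) fun h => ?_
    have h2 := hirr.natCast_mul (m := N + 1) (by omega)
    apply h2.ne_nat ⌊((N : ℝ) + 1) * α⌋₊
    push_cast
    exact h.symm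
  · linarith [Nat.lt_floor_add_one (((N : ℝ) + 1) * α)]

/-- Golden Sudler products are bounded away from zero. -/
theorem min_le_logSudler (hα : 0 < α) (hg : α ^ 2 + α = 1) (hirr : Irrational α) (N : ℕ) :
    min 0 (logSudler α 1) ≤ logSudler α N := by
  have hb := golden_bounds hα hg
  induction N using Nat.strong_induction_on with
  | _ N ih =>
    rcases lt_or_ge N 2 with hN | hN
    · interval_cases N
      · rw [logSudler_zero]; exact min_le_left _ _
      · exact min_le_right _ _
    obtain ⟨M, y, hy, hy1, hM⟩ := exists_natCast_add_eq_mul hα hirr N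
    have hN' : (2 : ℝ) ≤ N := by exact_mod_cast hN
    have hMN : M < N := by
      have : (M : ℝ) < N := by nlinarith
      exact_mod_cast this
    have h1 := logSudler_sub_logSudler hα hg hirr N M y hy hy1 hM
    rw [← renormIncrement] at h1
    by_cases hout : y ≤ 2 * α - 1 ∨ α ≤ y
    · have h2 := renormIncrement_nonneg hα hg hirr hy hy1 hout
      linarith [ih M hMN]
    · push Not at hout
      obtain ⟨K, z, hz, hz1, hK⟩ := exists_natCast_add_eq_mul hα hirr M
      have h2 := logSudler_sub_logSudler hα hg hirr M K z hz hz1 hK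
      rw [← renormIncrement] at h2
      have hKM : K ≤ M := by
        have : (K : ℝ) < M + 1 := by nlinarith
        exact Nat.lt_succ_iff.1 (by exact_mod_cast this)
      have hrel : (K : ℝ) + z = N + 1 - M + (α - y * (1 + α)) := by
        rw [← hK]
        linear_combination (-(1 + α)) * hM + ((N : ℝ) + 1) * hg
      have hcase : z = α - y * (1 + α) ∨ z = 1 + α - y * (1 + α) := by
        have hp1 : y * (1 + α) < 1 := by nlinarith
        have hp0 : 0 < y * (1 + α) := by positivity
        have u1 : (K : ℝ) < N + 1 - M + 1 := by linarith
        have u2 : (N : ℝ) + 1 - M - 2 < K := by linarith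
        have u1' : (K : ℤ) < N + 1 - M + 1 := by exact_mod_cast u1
        have u2' : (N : ℤ) + 1 - M - 2 < K := by exact_mod_cast u2
        have u3 : (K : ℤ) = N + 1 - M ∨ (K : ℤ) = N + 1 - M - 1 := by omega
        rcases u3 with u3 | u3
        · left
          have : (K : ℝ) = N + 1 - M := by exact_mod_cast u3
          linarith
        · right
          have : (K : ℝ) = N + 1 - M - 1 := by exact_mod_cast u3
          linarith
      have h3 := renormIncrement_add_nonneg hα hg hirr hout.1 hout.2 hz hz1 hcase
      linarith [ih K (by omega)]

lemma fib_succ_mul_sub_fib (hg : α ^ 2 + α = 1) (n : ℕ) :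
    (Nat.fib (n + 1) : ℝ) * α - Nat.fib n = -(-α) ^ (n + 1) := by
  induction n with
  | zero => simp
  | succ n ih =>
    rw [Nat.fib_add_two, pow_succ]
    push_cast
    linear_combination (-α) * ih + (Nat.fib (n + 1) : ℝ) * hg

/-- Golden Sudler products are bounded along the Fibonacci numbers. -/
theorem exists_logSudler_fib_le (hα : 0 < α) (hg : α ^ 2 + α = 1) (hirr : Irrational α) :
    ∃ B : ℝ, ∀ n : ℕ, 3 ≤ n → logSudler α (Nat.fib n) ≤ B := by
  have hb := golden_bounds hα hg
  set κ := renormIncrement α ((1 + α) / 2) with hκdef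
  have hκ : 0 ≤ κ := renormIncrement_half_nonneg hα hg hirr
  have hα1 : (0 : ℝ) < 1 - α := by linarith
  set c := 2 * κ / (1 - α) / α with hc
  have hc0 : 0 ≤ c := by positivity
  have hstep : ∀ n : ℕ, 3 ≤ n →
      logSudler α (Nat.fib (n + 1)) + c * α ^ (n + 1) ≤ logSudler α (Nat.fib n) + c * α ^ n := by
    intro n hn
    have he := fib_succ_mul_sub_fib hg n
    set e := -(-α) ^ (n + 1) with hedef
    have hae : |e| = α ^ (n + 1) := by
      rw [hedef, abs_neg, abs_pow, abs_neg, abs_of_pos hα]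
    have hsmall : α ^ (n + 1) ≤ α ^ 4 :=
      pow_le_pow_of_le_one hα.le (by linarith) (by omega)
    have h4 : α ^ 4 = 2 - 3 * α := by
      linear_combination (α ^ 2 - α + 2) * hg
    have hlo : -(2 - 3 * α) ≤ e := by linarith [neg_abs_le e]
    have hhi : e ≤ 2 - 3 * α := by linarith [le_abs_self e]
    have h1 := logSudler_sub_logSudler hα hg hirr (Nat.fib (n + 1)) (Nat.fib n) (α + e)
      (by linarith) (by linarith) (by linarith)
    rw [← renormIncrement] at h1
    have hle : renormIncrement α (α + e) ≤ c * α * α ^ (n + 1) := by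
      rcases le_or_gt e 0 with h0 | h0
      · have := renormIncrement_nonpos hα hg hirr (y := α + e) (by linarith) (by linarith)
        exact this.trans (by positivity)
      · have h2 := renormIncrement_le_of_mem_Icc hα hg (y := α + e) (by linarith) (by linarith)
        rw [← hκdef, add_sub_cancel_left] at h2
        have hee : 2 * e * κ = 2 * α ^ (n + 1) * κ := by rw [← hae, abs_of_pos h0]
        have h3 : c * α * α ^ (n + 1) = 2 * α ^ (n + 1) * κ / (1 - α) := by
          rw [hc]; field_simp
        rw [h3, le_div_iff₀ hα1]
        linarith
    have h5 : c * α ^ n - c * α ^ (n + 1) = c * α * α ^ (n + 1) := by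
      rw [pow_succ]
      linear_combination (-(c * α ^ n)) * hg
    linarith
  refine ⟨logSudler α (Nat.fib 3) + c * α ^ 3, fun n hn => ?_⟩
  have hmono : logSudler α (Nat.fib n) + c * α ^ n ≤ logSudler α (Nat.fib 3) + c * α ^ 3 := by
    induction n, hn using Nat.le_induction with
    | base => exact le_rfl
    | succ n hn ih => exact (hstep n hn).trans ih
  have : 0 ≤ c * α ^ n := by positivity
  linarith

end golden

/-- for the golden mean `α = (√5 - 1)/2` and
`Sℓ(n) = Σ_{j=1}^n log(2 - 2cos(2πjα))`, one has `liminf_{n→∞} Sℓ(n)/log(n) = 0`. -/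
theorem stmt12 (α : ℝ) (hα : α = (Real.sqrt 5 - 1) / 2)
    (Sl : ℕ → ℝ)
    (hSl : ∀ n : ℕ, Sl n = ∑ j ∈ Finset.Icc 1 n,
      Real.log (2 - 2 * Real.cos (2 * Real.pi * j * α))) :
    liminf (fun n : ℕ => Sl n / Real.log n) atTop = 0 := by
  have h5 : Real.sqrt 5 ^ 2 = 5 := Real.sq_sqrt (by norm_num)
  have h52 : 2 < Real.sqrt 5 := Real.lt_sqrt_of_sq_lt (by norm_num)
  have hα0 : 0 < α := by rw [hα]; linarith
  have hg : α ^ 2 + α = 1 := by rw [hα]; nlinarith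
  have hirr : Irrational α := by
    have h := Real.goldenConj_irrational.neg
    have e : -Real.goldenConj = α := by
      rw [hα, Real.goldenConj]; ring
    rwa [e] at h
  have hS : ∀ n, Sl n = 2 * logSudler α n := by
    intro n
    rw [hSl, logSudler, Finset.mul_sum]
    refine Finset.sum_congr rfl fun j _ => ?_
    rw [show 2 * Real.pi * j * α = 2 * (Real.pi * (j * α)) by ring, Real.cos_two_mul,
      Real.cos_sq', show 2 - 2 * (2 * (1 - Real.sin (Real.pi * (j * α)) ^ 2) - 1)
        = (2 * Real.sin (Real.pi * (j * α))) ^ 2 by ring, Real.log_pow]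
    norm_num
  have hlog : Tendsto (fun n : ℕ => Real.log n) atTop atTop :=
    Real.tendsto_log_atTop.comp tendsto_natCast_atTop_atTop
  obtain ⟨B, hB⟩ := exists_logSudler_fib_le hα0 hg hirr
  have hlow : ∀ ε > 0, ∀ᶠ n : ℕ in atTop, -ε ≤ Sl n / Real.log n := by
    intro ε hε
    have hl := (tendsto_const_nhds (x := 2 * min 0 (logSudler α 1))).div_atTop hlog
    filter_upwards [hl.eventually_const_le (show -ε < 0 by linarith),
      hlog.eventually_gt_atTop 0] with n h1 h2
    refine h1.trans ?_
    gcongr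
    rw [hS]
    linarith [min_le_logSudler hα0 hg hirr n]
  have hup : ∀ ε > 0, ∃ᶠ n : ℕ in atTop, Sl n / Real.log n ≤ ε := by
    intro ε hε
    have hl := (tendsto_const_nhds (x := 2 * B)).div_atTop hlog
    have hev : ∀ᶠ n : ℕ in atTop, 2 * B / Real.log n ≤ ε ∧ 0 < Real.log n :=
      (hl.eventually_le_const hε).and (hlog.eventually_gt_atTop 0)
    have hfib : Tendsto Nat.fib atTop atTop :=
      tendsto_atTop_mono' _ ((eventually_ge_atTop 5).mono fun n hn => Nat.le_fib_self hn) tendsto_id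
    have hfe : ∀ᶠ n : ℕ in atTop, Sl (Nat.fib n) / Real.log (Nat.fib n) ≤ ε := by
      filter_upwards [hfib.eventually hev, eventually_ge_atTop 3] with n h1 h2
      refine le_trans ?_ h1.1
      have := h1.2
      gcongr
      rw [hS]
      linarith [hB n h2]
    exact hfib.frequently hfe.frequently
  have hbdd : IsBoundedUnder (· ≥ ·) atTop (fun n : ℕ => Sl n / Real.log n) :=
    isBoundedUnder_of_eventually_ge (hlow 1 one_pos)
  have hcobdd : IsCoboundedUnder (· ≥ ·) atTop (fun n : ℕ => Sl n / Real.log n) :=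
    IsCoboundedUnder.of_frequently_le (hup 1 one_pos)
  refine le_antisymm (le_of_forall_pos_le_add fun ε hε => ?_)
    (le_of_forall_pos_le_add fun ε hε => ?_)
  · rw [zero_add]
    exact liminf_le_of_frequently_le (hup ε hε) hbdd
  · linarith [le_liminf_of_le hcobdd (hlow ε hε)]
end

section
/- Let α = (√5 − 1)/2 be the golden mean, Sℓ(n) = Σ_{j=1}^{n} log(2 − 2cos(2πjα)), and let q_n denote the denominators of the continued fraction convergents of α, i.e. the Fibonacci numbers q_1 = 1, q_2 = 2, q_{n+1} = q_n + q_{n−1}. Then the sequence Sℓ(q_n) converges as n → ∞ to a limit L, this limit is strictly positive, and liminf_{n→∞} Sℓ(n) = L. -/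
open Filter

/-- The denominators of the continued fraction convergents of the golden mean:
the Fibonacci numbers with `fibq 1 = 1`, `fibq 2 = 2`, `fibq (n+1) = fibq n + fibq (n-1)`. -/
def fibq : ℕ → ℕ
  | 0 => 1
  | 1 => 1
  | (n + 2) => fibq (n + 1) + fibq n

namespace GoldenSudler

/-- The golden mean `(√5 - 1) / 2`. -/
noncomputable def gm : ℝ := (Real.sqrt 5 - 1) / 2

/-- `log |2 sin (π x)|`, the logarithm of the chord length `|1 - e^{2πix}|`. -/
noncomputable def lg (x : ℝ) : ℝ := Real.log (2 * Real.sin (Real.pi * x))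

/-- The logarithm of the shifted Sudler product `∏_{r=1}^N |2 sin (π (r gm + s))|`. -/
noncomputable def S (N : ℕ) (s : ℝ) : ℝ := ∑ r ∈ Finset.range N, lg ((r + 1 : ℕ) * gm + s)

lemma gm_sq : gm ^ 2 = 1 - gm := by
  have h : Real.sqrt 5 ^ 2 = 5 := Real.sq_sqrt (by norm_num)
  unfold gm; nlinarith

lemma gm_gt : 0.618 < gm := by
  have : (2.236 : ℝ) < Real.sqrt 5 := Real.lt_sqrt_of_sq_lt (by norm_num)
  unfold gm; linarith

lemma gm_lt : gm < 0.61804 := by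
  have : Real.sqrt 5 < 2.23608 := by
    rw [Real.sqrt_lt' (by norm_num)]; norm_num
  unfold gm; linarith

lemma gm_pos : 0 < gm := by linarith [gm_gt]

lemma gm_lt_one : gm < 1 := by linarith [gm_lt]

lemma gm_pow_pos (n : ℕ) : 0 < gm ^ n := pow_pos gm_pos n

lemma gm_pow_add_two (n : ℕ) : gm ^ (n + 2) = gm ^ n - gm ^ (n + 1) := by
  rw [pow_add, gm_sq, pow_succ]; ring

lemma neg_gm_pow (n : ℕ) : (-gm) ^ n = (-1) ^ n * gm ^ n := neg_pow gm n

/-- The Fibonacci numbers are the denominators of best approximation of the golden mean. -/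
lemma fib_succ_mul_gm (n : ℕ) : (Nat.fib (n + 1) : ℝ) * gm = Nat.fib n - (-gm) ^ (n + 1) := by
  induction n using Nat.twoStepInduction with
  | zero => simp
  | one =>
    simp only [Nat.fib_two, Nat.fib_one, Nat.reduceAdd]
    have := gm_sq
    push_cast; nlinarith
  | more n h1 h2 =>
    have h3 : (Nat.fib (n + 2 + 1) : ℝ) = Nat.fib (n + 1) + Nat.fib (n + 2) := by
      exact_mod_cast Nat.fib_add_two (n := n + 1)
    have h4 : (Nat.fib (n + 2) : ℝ) = Nat.fib n + Nat.fib (n + 1) := by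
      exact_mod_cast Nat.fib_add_two (n := n)
    have h5 : (-gm) ^ (n + 2 + 1) = (-gm) ^ (n + 1) + (-gm) ^ (n + 1 + 1) := by
      rw [pow_succ, pow_succ]
      linear_combination (-gm) ^ (n + 1) * gm_sq
    rw [h3, h5]
    linear_combination h1 + h2 - h4

lemma exists_int_fib_mul_gm (n : ℕ) : ∃ z : ℤ, (Nat.fib n : ℝ) * gm = z - (-gm) ^ n := by
  cases n with
  | zero => exact ⟨1, by simp⟩
  | succ n => exact ⟨Nat.fib n, by rw [fib_succ_mul_gm]; push_cast; rfl⟩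

lemma gm_pow_mul_fib (n : ℕ) : gm ^ n * Nat.fib (n + 1) + gm ^ (n + 1) * Nat.fib n = 1 := by
  induction n with
  | zero => simp
  | succ n ih =>
    rw [Nat.fib_add_two]
    push_cast
    linear_combination ih + (Nat.fib (n + 1) : ℝ) * gm_pow_add_two n

lemma fib_mul_gm_pow_le (n : ℕ) : (Nat.fib (n + 1) : ℝ) * gm ^ n ≤ 1 := by
  have := gm_pow_mul_fib n
  have h : 0 ≤ gm ^ (n + 1) * (Nat.fib n : ℝ) := by have := gm_pow_pos (n + 1); positivity
  linarith

lemma lg_neg (x : ℝ) : lg (-x) = lg x := by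
  simp [lg, Real.log_neg_eq_log]

lemma lg_add_int (x : ℝ) (z : ℤ) : lg (x + z) = lg x := by
  unfold lg
  rw [mul_add, mul_comm Real.pi (z : ℝ), Real.sin_add_int_mul_pi]
  rcases Int.even_or_odd z with h | h
  · rw [h.neg_one_zpow, one_mul]
  · rw [h.neg_one_zpow]
    rw [show 2 * (-1 * Real.sin (Real.pi * x)) = -(2 * Real.sin (Real.pi * x)) by ring,
      Real.log_neg_eq_log]

lemma lg_eq_of_add_eq_int {x y : ℝ} (z : ℤ) (h : x = y + z) : lg x = lg y := by
  rw [h, lg_add_int]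

lemma lg_one_sub (x : ℝ) : lg (1 - x) = lg x := by
  rw [← lg_neg x]
  exact lg_eq_of_add_eq_int 1 (by push_cast; ring)

lemma lg_neg_one_pow_mul (n : ℕ) (x : ℝ) : lg ((-1) ^ n * x) = lg x := by
  rcases neg_one_pow_eq_or ℝ n with h | h <;> simp [h, lg_neg]

lemma sin_pi_mul_pos {x : ℝ} (h0 : 0 < x) (h1 : x < 1) : 0 < Real.sin (Real.pi * x) :=
  Real.sin_pos_of_pos_of_lt_pi (by have := Real.pi_pos; positivity)
    (by nlinarith [Real.pi_pos])

lemma S_zero (s : ℝ) : S 0 s = 0 := by simp [S]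

lemma S_succ (N : ℕ) (s : ℝ) : S (N + 1) s = S N s + lg ((N + 1 : ℕ) * gm + s) := by
  simp [S, Finset.sum_range_succ]

lemma S_add (M N : ℕ) (s : ℝ) : S (M + N) s = S M s + S N (s + M * gm) := by
  unfold S
  rw [Finset.sum_range_add]
  congr 1
  refine Finset.sum_congr rfl fun r _ => ?_
  congr 1
  push_cast; ring

lemma S_congr (N : ℕ) {s t : ℝ} (z : ℤ) (h : s = t + z) : S N s = S N t := by
  unfold S
  refine Finset.sum_congr rfl fun r _ => lg_eq_of_add_eq_int z ?_
  rw [h]; ring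

/-- Reversing a block: the shift by `-M gm` turns the block `1, …, N` into `M - N, …, M - 1`. -/
lemma S_reverse (N M : ℕ) : S N (-((M + N + 1 : ℕ) * gm)) = S (M + N) 0 - S M 0 := by
  induction N generalizing M with
  | zero => simp [S_zero]
  | succ N ih =>
    rw [S_succ]
    have h := ih (M + 1)
    rw [show M + 1 + N + 1 = M + (N + 1) + 1 by ring] at h
    rw [h, S_succ M 0, show M + 1 + N = M + (N + 1) by ring]
    have : lg ((N + 1 : ℕ) * gm + -((M + (N + 1) + 1 : ℕ) * gm)) = lg ((M + 1 : ℕ) * gm + 0) := by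
      rw [← lg_neg]; congr 1; push_cast; ring
    rw [this]; ring

/-- `X n k` is the position on `(0, 1)` of the `k`-th point among the multiples `r gm`,
`1 ≤ r < fib (n + 1)`, reduced mod `1` and oriented by the parity of `n`. -/
noncomputable def X (n k : ℕ) : ℝ := gm ^ n * (k + ⌊(k : ℝ) * gm⌋₊ * gm)

lemma fib_succ_pos (n : ℕ) : 0 < Nat.fib (n + 1) := Nat.fib_pos.2 n.succ_pos

lemma mul_fib_mod_pos {n k : ℕ} (hk : 1 ≤ k) (hkq : k < Nat.fib (n + 1)) :
    0 < k * Nat.fib n % Nat.fib (n + 1) := by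
  rw [Nat.pos_iff_ne_zero]
  intro h
  have h1 : Nat.fib (n + 1) ∣ k :=
    (Nat.fib_coprime_fib_succ n).symm.dvd_of_dvd_mul_right (Nat.dvd_of_mod_eq_zero h)
  exact absurd (Nat.le_of_dvd hk h1) (not_le.2 hkq)

lemma floor_mul_gm {n k : ℕ} (hk : 1 ≤ k) (hkq : k < Nat.fib (n + 1)) :
    ⌊(k : ℝ) * gm⌋₊ = k * Nat.fib n / Nat.fib (n + 1) := by
  set q := Nat.fib (n + 1) with hq
  set r := k * Nat.fib n % q with hr
  set j := k * Nat.fib n / q with hj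
  have hq0 : (0 : ℝ) < q := by exact_mod_cast fib_succ_pos n
  have hr1 : (1 : ℝ) ≤ r := by exact_mod_cast mul_fib_mod_pos hk hkq
  have hr2 : (r : ℝ) + 1 ≤ q := by exact_mod_cast Nat.mod_lt _ (fib_succ_pos n)
  have hdm : (k : ℝ) * Nat.fib n = q * j + r := by
    exact_mod_cast (Nat.div_add_mod (k * Nat.fib n) q).symm
  have hp := fib_succ_mul_gm n
  have habs : |(k : ℝ) * (-gm) ^ (n + 1)| < 1 := by
    rw [abs_mul, abs_pow, abs_neg, abs_of_pos gm_pos, Nat.abs_cast]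
    have h1 := fib_mul_gm_pow_le n
    have h2 : (k : ℝ) ≤ q := by exact_mod_cast hkq.le
    have h3 : (k : ℝ) * gm ^ n ≤ 1 :=
      (mul_le_mul_of_nonneg_right h2 (gm_pow_pos n).le).trans h1
    rw [pow_succ, ← mul_assoc]
    nlinarith [gm_pos, gm_lt_one]
  rw [abs_lt] at habs
  have key : (q : ℝ) * (k * gm) = q * j + (r - k * (-gm) ^ (n + 1)) := by
    linear_combination (k : ℝ) * hp + hdm
  rw [Nat.floor_eq_iff (by have := gm_pos; positivity)]
  constructor
  · refine le_of_mul_le_mul_left ?_ hq0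
    linarith
  · refine lt_of_mul_lt_mul_left ?_ hq0.le
    linarith

lemma X_pos {n k : ℕ} (hk : 1 ≤ k) : gm ^ n ≤ X n k := by
  have h1 : (1 : ℝ) ≤ k := by exact_mod_cast hk
  have h2 : 0 ≤ (⌊(k : ℝ) * gm⌋₊ : ℝ) * gm := by have := gm_pos; positivity
  unfold X
  nlinarith [gm_pow_pos n]

lemma X_mono (n : ℕ) : Monotone (X n) := by
  intro a b hab
  have h1 : (a : ℝ) ≤ b := by exact_mod_cast hab
  have := gm_pos
  unfold X
  gcongr

/-- Reflection `r ↦ fib (n + 1) - r` in terms of the points `X n k`. -/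
lemma X_reflect {n k : ℕ} (hk : 1 ≤ k) (hkq : k < Nat.fib (n + 1)) :
    X n (Nat.fib (n + 1) - k) = 1 - gm ^ (n + 1) - X n k := by
  unfold X
  rw [floor_mul_gm hk hkq, floor_mul_gm (n := n) (by omega) (by omega)]
  set q := Nat.fib (n + 1) with hq
  have hq0 := fib_succ_pos n
  have h1 : (q - k) * Nat.fib n / q + k * Nat.fib n / q + 1 = Nat.fib n := by
    have hr := mul_fib_mod_pos hk hkq
    have hr' := Nat.mod_lt (k * Nat.fib n) hq0
    have hdm := Nat.div_add_mod (k * Nat.fib n) q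
    rw [← hq] at hr hr'
    set r := k * Nat.fib n % q
    set j := k * Nat.fib n / q
    have hle : j + 1 ≤ Nat.fib n := by
      by_contra hcon
      have : q * Nat.fib n ≤ q * j := Nat.mul_le_mul_left _ (by omega)
      have : k * Nat.fib n ≤ q * Nat.fib n := Nat.mul_le_mul_right _ hkq.le
      omega
    have : (q - k) * Nat.fib n = q * (Nat.fib n - j - 1) + (q - r) := by
      zify [hkq.le, hr'.le, hle, show j ≤ Nat.fib n by omega,
        show 1 ≤ Nat.fib n - j by omega]
      have : (k : ℤ) * Nat.fib n = q * j + r := by exact_mod_cast hdm.symm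
      linear_combination -this
    rw [this, Nat.mul_add_div hq0, Nat.div_eq_of_lt (by omega)]
    omega
  have h2 : (((q - k) * Nat.fib n / q : ℕ) : ℝ) + (k * Nat.fib n / q : ℕ) + 1 = Nat.fib n := by
    exact_mod_cast h1
  rw [Nat.cast_sub hkq.le]
  have h3 := gm_pow_mul_fib n
  rw [← hq] at h3
  linear_combination h3 + gm ^ (n + 1) * h2

lemma X_lt {n k : ℕ} (hk : 1 ≤ k) (hkq : k < Nat.fib (n + 1)) :
    X n k ≤ 1 - gm ^ (n + 1) - gm ^ n := by
  have := X_reflect hk hkq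
  have := X_pos (n := n) (k := Nat.fib (n + 1) - k) (by omega)
  linarith

/-- The products over `1 ≤ r < fib (n + 1)` expressed through the ordered points `X n k`. -/
lemma S_fib_pred (n : ℕ) (x : ℝ) :
    S (Nat.fib (n + 1) - 1) ((-1) ^ n * x) =
      ∑ k ∈ Finset.Ico 1 (Nat.fib (n + 1)), lg (X n k - x) := by
  set q := Nat.fib (n + 1) with hq
  have hq0 : 0 < q := fib_succ_pos n
  have hS : S (q - 1) ((-1) ^ n * x) =
      ∑ r ∈ Finset.Ico 1 q, lg ((r : ℕ) * gm + (-1) ^ n * x) := by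
    unfold S
    rw [Finset.sum_Ico_eq_sum_range]
    refine Finset.sum_congr rfl fun r _ => ?_
    rw [add_comm 1 r]
  have hmaps : ∀ k ∈ Finset.Ico 1 q, k * Nat.fib n % q ∈ Finset.Ico 1 q := by
    intro k hk
    rw [Finset.mem_Ico] at hk ⊢
    exact ⟨mul_fib_mod_pos hk.1 hk.2, Nat.mod_lt _ hq0⟩
  have hinj : Set.InjOn (fun k => k * Nat.fib n % q) (Finset.Ico 1 q : Finset ℕ) := by
    intro a ha b hb hab
    rw [Finset.mem_coe, Finset.mem_Ico] at ha hb
    have h : a ≡ b [MOD q] :=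
      Nat.ModEq.cancel_right_of_coprime (c := Nat.fib n)
        (Nat.fib_coprime_fib_succ n).symm hab
    exact h.eq_of_lt_of_lt ha.2 hb.2
  rw [hS]
  symm
  refine Finset.sum_nbij (fun k => k * Nat.fib n % q) hmaps hinj ?_ ?_
  · exact Finset.surjOn_of_injOn_of_card_le _ (fun k hk => hmaps k hk) hinj le_rfl
  · intro k hk
    rw [Finset.mem_Ico] at hk
    obtain ⟨z, hz⟩ := exists_int_fib_mul_gm n
    have hp := fib_succ_mul_gm n
    rw [← hq] at hp
    have hdm : (k : ℝ) * Nat.fib n = q * (k * Nat.fib n / q : ℕ) + (k * Nat.fib n % q : ℕ) := by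
      exact_mod_cast (Nat.div_add_mod (k * Nat.fib n) q).symm
    rw [← lg_neg, ← lg_neg_one_pow_mul n]
    symm
    refine lg_eq_of_add_eq_int (k * z - (k * Nat.fib n / q : ℕ) * Nat.fib n) ?_
    unfold X
    rw [floor_mul_gm hk.1 hk.2, ← hq]
    set j := k * Nat.fib n / q
    set r := k * Nat.fib n % q
    push_cast
    rw [neg_gm_pow] at hz hp
    rw [pow_succ, pow_succ] at hp
    linear_combination (k : ℝ) * hz - gm * hdm - (j : ℝ) * hp

lemma S_fib (n : ℕ) (x : ℝ) :
    S (Nat.fib (n + 1)) ((-1) ^ n * x) = lg (gm ^ (n + 1) + x) +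
      ∑ k ∈ Finset.Ico 1 (Nat.fib (n + 1)), lg (X n k - x) := by
  have h : Nat.fib (n + 1) = Nat.fib (n + 1) - 1 + 1 := by have := fib_succ_pos n; omega
  rw [← S_fib_pred]
  conv_lhs => rw [h, S_succ, ← h]
  rw [add_comm]
  congr 1
  rw [← lg_neg_one_pow_mul n (gm ^ (n + 1) + x)]
  refine lg_eq_of_add_eq_int (Nat.fib n) ?_
  have hp := fib_succ_mul_gm n
  rw [neg_gm_pow, pow_succ (-1 : ℝ)] at hp
  push_cast
  linear_combination hp

/-- `U n = log P_{fib (n + 1)}`. -/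
noncomputable def U (n : ℕ) : ℝ := S (Nat.fib (n + 1)) 0

/-- `V n = log P_{fib (n + 1) - 1}`. -/
noncomputable def V (n : ℕ) : ℝ := S (Nat.fib (n + 1) - 1) 0

lemma V_eq (n : ℕ) : V n = ∑ k ∈ Finset.Ico 1 (Nat.fib (n + 1)), lg (X n k) := by
  have := S_fib_pred n 0
  simpa [V] using this

lemma U_eq (n : ℕ) : U n = lg (gm ^ (n + 1)) + V n := by
  have := S_fib n 0
  rw [V_eq]
  simpa [U] using this

/-- The correction term of the Fibonacci-type recurrence for `U`. -/
noncomputable def T (n k : ℕ) : ℝ :=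
  Real.log (1 + Real.sin (Real.pi * gm ^ (n + 2)) * Real.sin (Real.pi * gm ^ (n + 3)) /
    (Real.sin (Real.pi * X n k) * Real.sin (Real.pi * (X n k + gm ^ (n + 1)))))

lemma sum_reflect (n : ℕ) (f : ℝ → ℝ) :
    ∑ k ∈ Finset.Ico 1 (Nat.fib (n + 1)), f (X n k) =
      ∑ k ∈ Finset.Ico 1 (Nat.fib (n + 1)), f (1 - gm ^ (n + 1) - X n k) := by
  refine Finset.sum_nbij' (fun k => Nat.fib (n + 1) - k) (fun k => Nat.fib (n + 1) - k)
    ?_ ?_ ?_ ?_ ?_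
  · intro k hk; rw [Finset.mem_Ico] at *; omega
  · intro k hk; rw [Finset.mem_Ico] at *; omega
  · intro k hk; rw [Finset.mem_Ico] at *; omega
  · intro k hk; rw [Finset.mem_Ico] at *; omega
  · intro k hk
    rw [Finset.mem_Ico] at hk
    rw [X_reflect hk.1 hk.2]
    congr 1; ring

lemma two_mul_sum_lg_add (n : ℕ) (a b : ℝ) (hab : a + b = gm ^ (n + 1)) :
    2 * ∑ k ∈ Finset.Ico 1 (Nat.fib (n + 1)), lg (X n k + a) =
      ∑ k ∈ Finset.Ico 1 (Nat.fib (n + 1)), (lg (X n k + a) + lg (X n k + b)) := by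
  rw [two_mul, Finset.sum_add_distrib]
  congr 1
  rw [sum_reflect n (fun x => lg (x + a))]
  refine Finset.sum_congr rfl fun k _ => ?_
  rw [← lg_one_sub]
  congr 1
  linear_combination -hab

lemma sin_mul_sin_shift (x a b : ℝ) :
    Real.sin (x + a) * Real.sin (x + b) =
      Real.sin x * Real.sin (x + (a + b)) + Real.sin a * Real.sin b := by
  simp only [Real.sin_add, Real.cos_add]
  linear_combination (Real.sin a * Real.sin b) * Real.sin_sq_add_cos_sq x

lemma lg_add_lg {x y : ℝ} (hx0 : 0 < x) (hx1 : x < 1) (hy0 : 0 < y) (hy1 : y < 1) :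
    lg x + lg y = Real.log (4 * (Real.sin (Real.pi * x) * Real.sin (Real.pi * y))) := by
  have h1 := sin_pi_mul_pos hx0 hx1
  have h2 := sin_pi_mul_pos hy0 hy1
  unfold lg
  rw [← Real.log_mul (by positivity) (by positivity)]
  congr 1; ring

lemma gm_pow_lt_one {n : ℕ} (hn : n ≠ 0) : gm ^ n < 1 :=
  pow_lt_one₀ gm_pos.le gm_lt_one hn

lemma sum_lg_shift (n : ℕ) :
    ∑ k ∈ Finset.Ico 1 (Nat.fib (n + 1)), lg (X n k + gm ^ (n + 2)) =
      V n + (∑ k ∈ Finset.Ico 1 (Nat.fib (n + 1)), T n k) / 2 := by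
  have h1 := two_mul_sum_lg_add n (gm ^ (n + 2)) (gm ^ (n + 3))
    (by rw [gm_pow_add_two (n + 1)]; ring)
  have h2 := two_mul_sum_lg_add n 0 (gm ^ (n + 1)) (zero_add _)
  simp only [add_zero] at h2
  rw [← V_eq] at h2
  suffices h : ∀ k ∈ Finset.Ico 1 (Nat.fib (n + 1)),
      lg (X n k + gm ^ (n + 2)) + lg (X n k + gm ^ (n + 3)) =
        (lg (X n k) + lg (X n k + gm ^ (n + 1))) + T n k by
    rw [Finset.sum_congr rfl h, Finset.sum_add_distrib, ← h2] at h1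
    linarith
  intro k hk
  rw [Finset.mem_Ico] at hk
  have hX0 := X_pos (n := n) hk.1
  have hX1 := X_lt hk.1 hk.2
  have p0 := gm_pow_pos n
  have p1 := gm_pow_pos (n + 1)
  have p2 := gm_pow_pos (n + 2)
  have p3 := gm_pow_pos (n + 3)
  have q2 := gm_pow_add_two n
  have q3 := gm_pow_add_two (n + 1)
  rw [show n + 1 + 2 = n + 3 by ring, show n + 1 + 1 = n + 2 by ring] at q3
  rw [lg_add_lg (by linarith) (by linarith) (by linarith) (by linarith),
    lg_add_lg (by linarith) (by linarith) (by linarith) (by linarith), T]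
  have s0 : 0 < Real.sin (Real.pi * X n k) := sin_pi_mul_pos (by linarith) (by linarith)
  have s1 : 0 < Real.sin (Real.pi * (X n k + gm ^ (n + 1))) :=
    sin_pi_mul_pos (by linarith) (by linarith)
  have s2 : 0 < Real.sin (Real.pi * gm ^ (n + 2)) :=
    sin_pi_mul_pos p2 (gm_pow_lt_one (by omega))
  have s3 : 0 < Real.sin (Real.pi * gm ^ (n + 3)) :=
    sin_pi_mul_pos p3 (gm_pow_lt_one (by omega))
  rw [← Real.log_mul (by positivity) (by positivity)]
  congr 1
  rw [mul_add Real.pi, mul_add Real.pi, sin_mul_sin_shift, ← mul_add, ← mul_add,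
    show gm ^ (n + 2) + gm ^ (n + 3) = gm ^ (n + 1) by linarith]
  field_simp

/-- `∑ T n k / 2`, the defect in the recurrence for `U`. -/
noncomputable def E (n : ℕ) : ℝ := (∑ k ∈ Finset.Ico 1 (Nat.fib (n + 1)), T n k) / 2

/-- The inhomogeneity in the recurrence for `U`. -/
noncomputable def c (n : ℕ) : ℝ := lg (gm ^ (n + 1)) - lg (gm ^ (n + 3)) - E n

lemma U_rec (n : ℕ) : U (n + 2) = U (n + 1) + U n - c n := by
  have h1 : U (n + 2) = U (n + 1) + S (Nat.fib (n + 1)) (0 + Nat.fib (n + 2) * gm) := by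
    unfold U
    rw [← S_add, show n + 2 + 1 = n + 1 + 2 by ring, Nat.fib_add_two (n := n + 1), add_comm]
  have h2 : S (Nat.fib (n + 1)) (0 + Nat.fib (n + 2) * gm) =
      S (Nat.fib (n + 1)) ((-1) ^ n * (-gm ^ (n + 2))) := by
    refine S_congr _ (Nat.fib (n + 1)) ?_
    have := fib_succ_mul_gm (n + 1)
    rw [neg_gm_pow] at this
    push_cast
    rw [zero_add, this]; ring
  have h3 := sum_lg_shift n
  rw [h1, h2, S_fib, U_eq n, c, E]
  simp only [sub_neg_eq_add]
  rw [h3, show gm ^ (n + 1) + -gm ^ (n + 2) = gm ^ (n + 3) by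
    rw [gm_pow_add_two (n + 1)]; ring]
  ring

lemma concaveOn_lg : ConcaveOn ℝ (Set.Ioo 0 1) lg := by
  have hsin : ConcaveOn ℝ (Set.Ioo (0 : ℝ) 1) (fun x => 2 * Real.sin (Real.pi * x)) := by
    have h := (strictConcaveOn_sin_Icc.concaveOn.comp_linearMap
      (LinearMap.lsmul ℝ ℝ Real.pi)).smul (show (0 : ℝ) ≤ 2 by norm_num)
    refine h.subset ?_ (convex_Ioo 0 1)
    intro x hx
    have := Real.pi_pos
    simp only [Set.mem_preimage, LinearMap.lsmul_apply, smul_eq_mul, Set.mem_Icc]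
    exact ⟨by have := hx.1; positivity, by nlinarith [hx.2]⟩
  refine ⟨convex_Ioo 0 1, fun x hx y hy a b ha hb hab => ?_⟩
  have hx' := sin_pi_mul_pos hx.1 hx.2
  have hy' := sin_pi_mul_pos hy.1 hy.2
  have h1 := strictConcaveOn_log_Ioi.concaveOn.2
    (show 2 * Real.sin (Real.pi * x) ∈ Set.Ioi 0 by simp [hx'])
    (show 2 * Real.sin (Real.pi * y) ∈ Set.Ioi 0 by simp [hy']) ha hb hab
  have h2 := hsin.2 hx hy ha hb hab
  refine h1.trans (Real.log_le_log ?_ h2)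
  exact (convex_Ioi (0 : ℝ)) (by simp [hx']) (by simp [hy']) ha hb hab

/-- On the interval of admissible shifts the block product is at least its smaller value at the
end points. -/
lemma min_le_S_fib {n : ℕ} (hn : 1 ≤ n) {x : ℝ} (h0 : -gm ^ (n + 3) ≤ x) (h1 : x ≤ gm ^ (n + 2)) :
    min (S (Nat.fib (n + 1)) ((-1) ^ n * -gm ^ (n + 3)))
      (S (Nat.fib (n + 1)) ((-1) ^ n * gm ^ (n + 2))) ≤
      S (Nat.fib (n + 1)) ((-1) ^ n * x) := by
  have p0 := gm_pow_pos n
  have p1 := gm_pow_pos (n + 1)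
  have p2 := gm_pow_pos (n + 2)
  have p3 := gm_pow_pos (n + 3)
  have q2 := gm_pow_add_two n
  have q3 := gm_pow_add_two (n + 1)
  rw [show n + 1 + 2 = n + 3 by ring, show n + 1 + 1 = n + 2 by ring] at q3
  have l0 : gm ^ n < 1 := gm_pow_lt_one (by omega)
  have hcv : Convex ℝ (Set.Icc (-gm ^ (n + 3)) (gm ^ (n + 2))) := convex_Icc _ _
  have hconc : ConcaveOn ℝ (Set.Icc (-gm ^ (n + 3)) (gm ^ (n + 2)))
      (fun x => S (Nat.fib (n + 1)) ((-1) ^ n * x)) := by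
    simp only [S_fib]
    refine ConcaveOn.add ?_ ?_
    · refine ⟨hcv, fun x hx y hy a b ha hb hab => ?_⟩
      have := concaveOn_lg.2 (x := gm ^ (n + 1) + x) (y := gm ^ (n + 1) + y)
        ⟨by linarith [hx.1], by linarith [hx.2]⟩ ⟨by linarith [hy.1], by linarith [hy.2]⟩ ha hb hab
      convert this using 2
      simp only [smul_eq_mul]
      linear_combination (-gm ^ (n + 1)) * hab
    · refine ⟨hcv, fun x hx y hy a b ha hb hab => ?_⟩
      simp only [smul_eq_mul, Finset.mul_sum, ← Finset.sum_add_distrib]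
      refine Finset.sum_le_sum fun k hk => ?_
      rw [Finset.mem_Ico] at hk
      have hX0 := X_pos (n := n) hk.1
      have hX1 := X_lt hk.1 hk.2
      have := concaveOn_lg.2 (x := X n k - x) (y := X n k - y)
        ⟨by linarith [hx.2], by linarith [hx.1]⟩ ⟨by linarith [hy.2], by linarith [hy.1]⟩ ha hb hab
      simp only [smul_eq_mul] at this
      rwa [show a * (X n k - x) + b * (X n k - y) = X n k - (a * x + b * y) by
        linear_combination (X n k) * hab] at this
  exact hconc.min_le_of_mem_Icc ⟨le_rfl, by linarith⟩ ⟨by linarith, le_rfl⟩ ⟨h0, h1⟩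

lemma S_fib_left (n : ℕ) :
    S (Nat.fib (n + 1)) ((-1) ^ n * -gm ^ (n + 3)) = V (n + 2) - V (n + 1) := by
  have h0 : 0 < Nat.fib (n + 2) := fib_succ_pos (n + 1)
  have h1 : Nat.fib (n + 3) = Nat.fib (n + 1) + Nat.fib (n + 2) := Nat.fib_add_two
  have h2 := S_reverse (Nat.fib (n + 1)) (Nat.fib (n + 2) - 1)
  rw [show Nat.fib (n + 2) - 1 + Nat.fib (n + 1) + 1 = Nat.fib (n + 3) by omega,
    show Nat.fib (n + 2) - 1 + Nat.fib (n + 1) = Nat.fib (n + 3) - 1 by omega] at h2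
  unfold V
  rw [← h2]
  refine S_congr _ (Nat.fib (n + 2)) ?_
  have h3 := fib_succ_mul_gm (n + 2)
  rw [neg_gm_pow] at h3
  push_cast
  rw [h3]; ring

lemma S_fib_right (n : ℕ) :
    S (Nat.fib (n + 2)) ((-1) ^ (n + 1) * gm ^ (n + 3)) = V (n + 2) - V n := by
  have h0 := fib_succ_pos n
  have h1 : Nat.fib (n + 3) = Nat.fib (n + 1) + Nat.fib (n + 2) := Nat.fib_add_two
  have h2 := S_reverse (Nat.fib (n + 2)) (Nat.fib (n + 1) - 1)
  rw [show Nat.fib (n + 1) - 1 + Nat.fib (n + 2) + 1 = Nat.fib (n + 3) by omega,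
    show Nat.fib (n + 1) - 1 + Nat.fib (n + 2) = Nat.fib (n + 3) - 1 by omega] at h2
  unfold V
  rw [← h2]
  refine S_congr _ (Nat.fib (n + 2)) ?_
  have h3 := fib_succ_mul_gm (n + 2)
  rw [neg_gm_pow] at h3
  push_cast
  rw [h3]; ring

lemma S_fib_nonneg (hV : Monotone V) (n : ℕ) {x : ℝ} (h0 : -gm ^ (n + 4) ≤ x)
    (h1 : x ≤ gm ^ (n + 3)) : 0 ≤ S (Nat.fib (n + 2)) ((-1) ^ (n + 1) * x) := by
  refine le_trans (le_min ?_ ?_) (min_le_S_fib (n := n + 1) (by omega) h0 h1)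
  · rw [S_fib_left (n + 1)]
    exact sub_nonneg.2 (hV (by omega))
  · rw [S_fib_right n]
    exact sub_nonneg.2 (hV (by omega))

/-- The Ostrowski (Zeckendorf) decomposition argument: blocks of lower order contribute
nonnegatively, whatever admissible shift the higher blocks have produced. -/
lemma S_nonneg_of_lt_fib (hV : Monotone V) (a : ℕ) : ∀ N < Nat.fib (a + 1), ∀ x : ℝ,
    -gm ^ (a + 2) ≤ x → x ≤ gm ^ (a + 1) → 0 ≤ S N ((-1) ^ (a + 1) * x) := by
  induction a using Nat.twoStepInduction with
  | zero =>
    intro N hN x _ _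
    obtain rfl : N = 0 := by simpa using hN
    rw [S_zero]
  | one =>
    intro N hN x _ _
    obtain rfl : N = 0 := by simpa using hN
    rw [S_zero]
  | more a ih0 ih1 =>
    intro N hN x h0 h1
    have p2 := gm_pow_pos (a + 2)
    have p3 := gm_pow_pos (a + 3)
    have p4 := gm_pow_pos (a + 4)
    have q3 := gm_pow_add_two (a + 1)
    have q4 := gm_pow_add_two (a + 2)
    simp only [show a + 1 + 2 = a + 3 by ring, show a + 1 + 1 = a + 2 by ring,
      show a + 2 + 2 = a + 4 by ring] at *
    by_cases hlt : N < Nat.fib (a + 2)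
    · have := ih1 N hlt (-x) (by linarith) (by linarith)
      convert this using 2
      rw [pow_succ (-1 : ℝ) (a + 2)]; ring
    · obtain ⟨M, rfl⟩ := Nat.exists_eq_add_of_le (not_lt.1 hlt)
      have hfib := Nat.fib_add_two (n := a + 1)
      rw [show a + 1 + 2 = a + 3 by ring, show a + 1 + 1 = a + 2 by ring] at hfib
      rw [S_add]
      refine add_nonneg ?_ ?_
      · have := S_fib_nonneg hV a h0 h1
        rwa [show (-1 : ℝ) ^ (a + 3) = (-1) ^ (a + 1) by
          rw [show a + 3 = a + 1 + 2 by ring, pow_add (-1 : ℝ) (a + 1) 2]; ring]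
      · have := ih0 M (by omega) (x + gm ^ (a + 2)) (by linarith) (by linarith)
        rw [S_congr M (t := (-1) ^ (a + 1) * (x + gm ^ (a + 2))) (Nat.fib (a + 1))]
        · exact this
        · have h3 := fib_succ_mul_gm (a + 1)
          rw [neg_gm_pow] at h3
          push_cast
          rw [h3, show a + 3 = a + 1 + 2 by ring, pow_add (-1 : ℝ) (a + 1) 2]; ring

lemma U_le_S (hV : Monotone V) {n N : ℕ} (h0 : Nat.fib (n + 1) ≤ N) (h1 : N < Nat.fib (n + 2)) :
    U n ≤ S N 0 := by
  obtain ⟨M, rfl⟩ := Nat.exists_eq_add_of_le h0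
  rw [S_add, U, le_add_iff_nonneg_right]
  cases n with
  | zero =>
    obtain rfl : M = 0 := by simp at h1
    rw [S_zero]
  | succ n =>
    have hfib : Nat.fib (n + 3) = Nat.fib (n + 1) + Nat.fib (n + 2) := Nat.fib_add_two
    simp only [show n + 1 + 2 = n + 3 by ring, show n + 1 + 1 = n + 2 by ring] at *
    have h := S_nonneg_of_lt_fib hV n M (by omega) (gm ^ (n + 2))
      (by linarith [gm_pow_pos (n + 2)])
      (by linarith [gm_pow_pos (n + 3), gm_pow_add_two (n + 1)])
    rw [S_congr M (t := (-1) ^ (n + 1) * gm ^ (n + 2)) (Nat.fib (n + 1))]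
    · exact h
    · have h3 := fib_succ_mul_gm (n + 1)
      rw [neg_gm_pow] at h3
      push_cast
      rw [h3]; ring

lemma mul_sin_le_sin_mul {t y : ℝ} (ht0 : 0 ≤ t) (ht1 : t ≤ 1) (hy0 : 0 ≤ y) (hy : y ≤ Real.pi) :
    t * Real.sin y ≤ Real.sin (t * y) := by
  have h := strictConcaveOn_sin_Icc.concaveOn.2 (x := y) (y := 0) ⟨hy0, hy⟩
    ⟨le_rfl, Real.pi_pos.le⟩ ht0 (sub_nonneg.2 ht1) (by ring)
  simpa using h

lemma lg_add_log_le {x y : ℝ} (hx : 0 < x) (hxy : x ≤ y) (hy : y < 1) :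
    lg y + Real.log (x / y) ≤ lg x := by
  have hy0 : 0 < y := hx.trans_le hxy
  have h1 := sin_pi_mul_pos hy0 hy
  have h2 := mul_sin_le_sin_mul (t := x / y) (y := Real.pi * y) (by positivity)
    ((div_le_one hy0).2 hxy) (by have := Real.pi_pos; positivity) (by nlinarith [Real.pi_pos])
  rw [show x / y * (Real.pi * y) = Real.pi * x by field_simp] at h2
  unfold lg
  rw [← Real.log_mul (by positivity) (by positivity)]
  refine Real.log_le_log (by positivity) ?_
  linarith

lemma lg_sub_div_le {x y : ℝ} (hx : 0 < x) (hxy : x ≤ y) (hy : y < 1) :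
    lg y - (y - x) / x ≤ lg x := by
  have hy0 : 0 < y := hx.trans_le hxy
  have h1 := lg_add_log_le hx hxy hy
  have h2 := Real.one_sub_inv_le_log_of_pos (show 0 < x / y by positivity)
  have h3 : 1 - (x / y)⁻¹ = -((y - x) / x) := by field_simp; ring
  linarith

lemma sum_lg_div (q : ℕ) (hq : 0 < q) :
    ∑ k ∈ Finset.Ico 1 q, lg (k / q) = Real.log q := by
  obtain ⟨n, rfl⟩ : ∃ n, q = n + 1 := ⟨q - 1, by omega⟩
  have hμ := Complex.isPrimitiveRoot_exp (n + 1) (by omega)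
  have h := congrArg (fun z : ℂ => Real.log ‖z‖) hμ.prod_one_sub_pow_eq_order
  simp only [norm_prod] at h
  rw [show ‖(n : ℂ) + 1‖ = ((n + 1 : ℕ) : ℝ) by
    rw [← Nat.cast_succ, Complex.norm_natCast]] at h
  rw [← h, Finset.sum_Ico_eq_sum_range, Real.log_prod]
  · simp only [Nat.add_sub_cancel]
    refine Finset.sum_congr rfl fun k _ => ?_
    rw [norm_sub_rev, ← Complex.exp_nat_mul,
      show ((k + 1 : ℕ) : ℂ) * (2 * Real.pi * Complex.I / (n + 1 : ℕ)) =
        Complex.I * ((2 * Real.pi * ((k + 1 : ℕ) / (n + 1 : ℕ) : ℝ) : ℝ) : ℂ) by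
        push_cast; ring, Complex.norm_exp_I_mul_ofReal_sub_one, Real.norm_eq_abs, Real.log_abs, lg]
    congr 3
    push_cast; ring
  · intro k hk
    rw [Finset.mem_range] at hk
    rw [norm_ne_zero_iff, sub_ne_zero]
    exact fun he => hμ.pow_ne_one_of_pos_of_lt (by omega) (by omega) he.symm

lemma X_bounds {n k : ℕ} (hk : 1 ≤ k) (hkq : k < Nat.fib (n + 1)) :
    X n k ≤ k / Nat.fib (n + 1) ∧ (k : ℝ) / Nat.fib (n + 1) ≤ X n k + gm ^ (n + 1) := by
  have hq0 : (0 : ℝ) < Nat.fib (n + 1) := by exact_mod_cast fib_succ_pos n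
  have hr : ((k * Nat.fib n % Nat.fib (n + 1) : ℕ) : ℝ) ≤ Nat.fib (n + 1) := by
    exact_mod_cast (Nat.mod_lt _ (fib_succ_pos n)).le
  have hr0 : (0 : ℝ) ≤ (k * Nat.fib n % Nat.fib (n + 1) : ℕ) := Nat.cast_nonneg _
  have hdm : (k : ℝ) * Nat.fib n = Nat.fib (n + 1) * (k * Nat.fib n / Nat.fib (n + 1) : ℕ) +
      (k * Nat.fib n % Nat.fib (n + 1) : ℕ) := by
    exact_mod_cast (Nat.div_add_mod _ _).symm
  unfold X
  rw [floor_mul_gm hk hkq]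
  set r := ((k * Nat.fib n % Nat.fib (n + 1) : ℕ) : ℝ)
  set j := ((k * Nat.fib n / Nat.fib (n + 1) : ℕ) : ℝ)
  have h1 := gm_pow_mul_fib n
  have p1 := gm_pow_pos (n + 1)
  have key : (k : ℝ) = gm ^ n * (k + j * gm) * Nat.fib (n + 1) + gm ^ (n + 1) * r := by
    linear_combination (-k : ℝ) * h1 + gm ^ (n + 1) * hdm
  rw [le_div_iff₀ hq0, div_le_iff₀ hq0]
  constructor <;> nlinarith

lemma lg_X_bounds {n k : ℕ} (hk : 1 ≤ k) (hkq : k < Nat.fib (n + 1)) :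
    lg (k / Nat.fib (n + 1)) - (k : ℝ)⁻¹ ≤ lg (X n k) ∧
      lg (X n k) ≤ lg (k / Nat.fib (n + 1)) + ((Nat.fib (n + 1) - k : ℕ) : ℝ)⁻¹ := by
  obtain ⟨hb1, hb2⟩ := X_bounds hk hkq
  set q := Nat.fib (n + 1) with hq
  have hk0 : (1 : ℝ) ≤ k := by exact_mod_cast hk
  have hkq' : (k : ℝ) < q := by exact_mod_cast hkq
  have hq0 : (0 : ℝ) < q := by linarith
  have p0 := gm_pow_pos n
  have p1 := gm_pow_pos (n + 1)
  have hX : gm ^ n * k ≤ X n k := by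
    have h2 : 0 ≤ gm ^ n * ((⌊(k : ℝ) * gm⌋₊ : ℝ) * gm) := by have := gm_pos; positivity
    unfold X; linarith
  have hX0 : 0 < X n k := by nlinarith
  have hlt : (k : ℝ) / q < 1 := (div_lt_one hq0).2 hkq'
  have hqg : (q : ℝ) * gm ^ (n + 1) ≤ 1 := by
    have := fib_mul_gm_pow_le n
    rw [pow_succ]; nlinarith [gm_pos, gm_lt_one]
  constructor
  · have h := lg_sub_div_le hX0 hb1 hlt
    have h3 : ((k : ℝ) / q - X n k) / X n k ≤ (k : ℝ)⁻¹ := by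
      rw [div_le_iff₀ hX0]
      calc (k : ℝ) / q - X n k ≤ gm ^ (n + 1) := by linarith
        _ ≤ gm ^ n := by rw [pow_succ]; nlinarith [gm_lt_one]
        _ = (k : ℝ)⁻¹ * (gm ^ n * k) := by field_simp
        _ ≤ _ := by gcongr
    linarith
  · have h := lg_sub_div_le (x := 1 - k / q) (y := 1 - X n k) (by linarith) (by linarith)
      (by linarith)
    rw [lg_one_sub, lg_one_sub] at h
    have h3 : ((1 - X n k) - (1 - (k : ℝ) / q)) / (1 - k / q) ≤ ((q - k : ℕ) : ℝ)⁻¹ := by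
      rw [div_le_iff₀ (by linarith), Nat.cast_sub hkq.le]
      calc (1 - X n k) - (1 - (k : ℝ) / q) ≤ gm ^ (n + 1) := by linarith
        _ ≤ (q : ℝ)⁻¹ := by rw [← one_div, le_div_iff₀ hq0]; linarith
        _ = ((q : ℝ) - k)⁻¹ * (1 - k / q) := by
          have : (q : ℝ) - k ≠ 0 := by linarith
          field_simp
    linarith

lemma sum_inv_le (q : ℕ) : ∑ k ∈ Finset.Ico 1 q, (k : ℝ)⁻¹ ≤ 1 + Real.log q := by
  have h := harmonic_le_one_add_log q
  refine le_trans ?_ h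
  rw [harmonic_eq_sum_Icc]
  push_cast
  refine Finset.sum_le_sum_of_subset_of_nonneg ?_ (fun i _ _ => by positivity)
  intro k hk
  rw [Finset.mem_Ico] at hk
  rw [Finset.mem_Icc]
  omega

lemma log_gm_neg : -1 ≤ Real.log gm := by
  have h := Real.one_sub_inv_le_log_of_pos gm_pos
  have h2 : gm⁻¹ ≤ 2 := by
    rw [inv_le_comm₀ gm_pos (by norm_num)]; linarith [gm_gt]
  linarith

lemma log_fib_le (n : ℕ) : Real.log (Nat.fib (n + 1)) ≤ n := by
  have hq0 : (0 : ℝ) < Nat.fib (n + 1) := by exact_mod_cast fib_succ_pos n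
  have h := Real.log_le_log (mul_pos hq0 (gm_pow_pos n)) (fib_mul_gm_pow_le n)
  rw [Real.log_mul hq0.ne' (gm_pow_pos n).ne', Real.log_pow, Real.log_one] at h
  nlinarith [log_gm_neg, (Nat.cast_nonneg n : (0 : ℝ) ≤ n)]

lemma abs_V_le (n : ℕ) : |V n| ≤ 2 * n + 1 := by
  have h1 : ∑ k ∈ Finset.Ico 1 (Nat.fib (n + 1)), lg (k / Nat.fib (n + 1)) -
      ∑ k ∈ Finset.Ico 1 (Nat.fib (n + 1)), (k : ℝ)⁻¹ ≤ V n := by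
    rw [V_eq, ← Finset.sum_sub_distrib]
    refine Finset.sum_le_sum fun k hk => ?_
    rw [Finset.mem_Ico] at hk
    exact (lg_X_bounds hk.1 hk.2).1
  have h2 : V n ≤ ∑ k ∈ Finset.Ico 1 (Nat.fib (n + 1)), lg (k / Nat.fib (n + 1)) +
      ∑ k ∈ Finset.Ico 1 (Nat.fib (n + 1)), (k : ℝ)⁻¹ := by
    have : ∑ k ∈ Finset.Ico 1 (Nat.fib (n + 1)), (k : ℝ)⁻¹ =
        ∑ k ∈ Finset.Ico 1 (Nat.fib (n + 1)), ((Nat.fib (n + 1) - k : ℕ) : ℝ)⁻¹ := by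
      have := Finset.sum_Ico_reflect (fun k : ℕ => (k : ℝ)⁻¹) 1
        (m := Nat.fib (n + 1)) (n := Nat.fib (n + 1)) (by omega)
      rw [this]
      simp
    rw [this, V_eq, ← Finset.sum_add_distrib]
    refine Finset.sum_le_sum fun k hk => ?_
    rw [Finset.mem_Ico] at hk
    exact (lg_X_bounds hk.1 hk.2).2
  rw [sum_lg_div _ (fib_succ_pos n)] at h1 h2
  have h3 := sum_inv_le (Nat.fib (n + 1))
  have h4 := log_fib_le n
  have h5 : 0 ≤ Real.log (Nat.fib (n + 1)) := Real.log_natCast_nonneg _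
  rw [abs_le]
  constructor <;> linarith

lemma abs_lg_gm_pow_le (n : ℕ) : |lg (gm ^ (n + 1))| ≤ n + 2 := by
  have p1 := gm_pow_pos (n + 1)
  have hle : gm ^ (n + 1) ≤ gm := by
    rw [pow_succ]
    have := pow_le_one₀ (n := n) gm_pos.le gm_lt_one.le
    nlinarith [gm_pos]
  have hs := sin_pi_mul_pos p1 (hle.trans_lt gm_lt_one)
  have hlow : gm ^ (n + 1) ≤ 2 * Real.sin (Real.pi * gm ^ (n + 1)) := by
    have h := mul_sin_le_sin_mul (t := 2 * gm ^ (n + 1) / (2 * gm)) (y := Real.pi * gm)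
      (by have := gm_pos; positivity)
      (by rw [div_le_one (by linarith [gm_pos])]; linarith)
      (by have := gm_pos; have := Real.pi_pos; positivity)
      (by nlinarith [gm_lt_one, Real.pi_pos])
    have h2 : 1 - gm ≤ Real.sin (Real.pi * gm) := by
      rw [← Real.sin_pi_sub, show Real.pi - Real.pi * gm = Real.pi / 2 * (2 * (1 - gm)) by ring]
      have := Real.le_sin_mul (x := 2 * (1 - gm)) (by linarith [gm_lt_one]) (by linarith [gm_gt])
      linarith [gm_lt_one]
    have h3 : 2 * gm ^ (n + 1) / (2 * gm) * (Real.pi * gm) = Real.pi * gm ^ (n + 1) := by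
      have := gm_pos; field_simp
    rw [h3] at h
    have h4 : gm ^ (n + 1) / 2 ≤ 2 * gm ^ (n + 1) / (2 * gm) * Real.sin (Real.pi * gm) := by
      rw [div_mul_eq_mul_div, le_div_iff₀ (by linarith [gm_pos])]
      nlinarith [gm_lt]
    linarith
  unfold lg
  rw [abs_le]
  constructor
  · have h := Real.log_le_log p1 hlow
    rw [Real.log_pow] at h
    push_cast at h
    nlinarith [log_gm_neg, (Nat.cast_nonneg n : (0 : ℝ) ≤ n)]
  · have h := Real.log_le_sub_one_of_pos
      (show 0 < 2 * Real.sin (Real.pi * gm ^ (n + 1)) by linarith)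
    have := Real.sin_le_one (Real.pi * gm ^ (n + 1))
    have : (0 : ℝ) ≤ n := Nat.cast_nonneg n
    linarith

lemma abs_U_le (n : ℕ) : |U n| ≤ 3 * n + 3 := by
  rw [U_eq]
  refine (abs_add_le _ _).trans ?_
  linarith [abs_V_le n, abs_lg_gm_pow_le n]

lemma tendsto_gm_pow_mul_U : Tendsto (fun n => gm ^ n * U n) atTop (nhds 0) := by
  have h1 := tendsto_self_mul_const_pow_of_lt_one gm_pos.le gm_lt_one
  have h2 := tendsto_pow_atTop_nhds_zero_of_lt_one gm_pos.le gm_lt_one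
  have h3 : Tendsto (fun n : ℕ => 3 * ((n : ℝ) * gm ^ n) + 3 * gm ^ n) atTop (nhds 0) := by
    simpa using (h1.const_mul 3).add (h2.const_mul 3)
  refine squeeze_zero_norm (fun n => ?_) h3
  rw [Real.norm_eq_abs, abs_mul, abs_of_pos (gm_pow_pos n)]
  nlinarith [abs_U_le n, gm_pow_pos n]

lemma gm_cube : gm ^ 3 = 2 * gm - 1 := by linear_combination (gm - 1) * gm_sq

lemma gm_pow_four : gm ^ 4 = 2 - 3 * gm := by linear_combination (gm ^ 2 - gm + 2) * gm_sq

lemma gm_pow_five : gm ^ 5 = 5 * gm - 3 := by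
  linear_combination gm * gm_pow_four - 3 * gm_sq

lemma gm_pow_le_pow {m n : ℕ} (h : m ≤ n) : gm ^ n ≤ gm ^ m :=
  pow_le_pow_of_le_one gm_pos.le gm_lt_one.le h

/-- The scale-free version of `X`. -/
noncomputable def th (k : ℕ) : ℝ := k + ⌊(k : ℝ) * gm⌋₊ * gm

lemma X_eq (n k : ℕ) : X n k = gm ^ n * th k := rfl

lemma one_le_th {k : ℕ} (hk : 1 ≤ k) : 1 ≤ th k := by
  have h1 : (1 : ℝ) ≤ k := by exact_mod_cast hk
  have h2 : 0 ≤ (⌊(k : ℝ) * gm⌋₊ : ℝ) * gm := by have := gm_pos; positivity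
  unfold th; linarith

lemma th_ge (k : ℕ) : (1 + gm ^ 2) * k - gm ≤ th k := by
  have h := Nat.lt_floor_add_one ((k : ℝ) * gm)
  unfold th
  nlinarith [gm_pos]

lemma sum_inv_th_le (M : ℕ) : ∑ k ∈ Finset.range (M + 1), 1 / (th (k + 1) * (th (k + 1) + gm)) ≤
    1.03 - (10 / 19) / (M + 1.3) := by
  induction M with
  | zero =>
    have h1 := one_le_th (k := 1) le_rfl
    have h2 : 1 / (th 1 * (th 1 + gm)) ≤ 1 / 1.618 :=
      one_div_le_one_div_of_le (by norm_num) (by nlinarith [gm_gt])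
    simp only [zero_add, Finset.sum_range_one, Nat.cast_zero]
    norm_num at h2 ⊢
    linarith
  | succ M ih =>
    rw [Finset.sum_range_succ]
    have hM : (0 : ℝ) ≤ M := Nat.cast_nonneg M
    have h1 := th_ge (M + 1 + 1)
    have h0 := one_le_th (k := M + 1 + 1) (by omega)
    push_cast at h1 ⊢
    set t := th (M + 1 + 1)
    have h2 : 1.3817 * ((M : ℝ) + 2) - 0.6181 ≤ t := by
      rw [gm_sq] at h1
      nlinarith [gm_gt, gm_lt]
    have h3 : 1.9 * ((M : ℝ) + 1.3) * (M + 2.3) ≤ t * (t + gm) := by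
      have h4 : (1.3817 * ((M : ℝ) + 2) - 0.6181) * (1.3817 * ((M : ℝ) + 2) - 0.6181 + 0.618) ≤
          t * (t + gm) := by
        apply mul_le_mul h2 (by linarith [gm_gt]) (by linarith) (by linarith)
      refine le_trans ?_ h4
      nlinarith [sq_nonneg ((M : ℝ) - 3)]
    have h4 : 1 / (t * (t + gm)) ≤ 1 / (1.9 * ((M : ℝ) + 1.3) * (M + 2.3)) :=
      one_div_le_one_div_of_le (by positivity) h3
    have h5 : 1 / (1.9 * ((M : ℝ) + 1.3) * (M + 2.3)) =
        (10 / 19) / (M + 1.3) - (10 / 19) / (M + 1 + 1.3) := by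
      have : (M : ℝ) + 1.3 ≠ 0 := by positivity
      have : (M : ℝ) + 2.3 ≠ 0 := by positivity
      have : (M : ℝ) + 1 + 1.3 ≠ 0 := by positivity
      field_simp
      ring
    linarith

lemma sum_inv_th_le' (M : ℕ) :
    ∑ k ∈ Finset.range M, 1 / (th (k + 1) * (th (k + 1) + gm)) ≤ 1.03 := by
  cases M with
  | zero => norm_num
  | succ M =>
    have h := sum_inv_th_le M
    have : 0 ≤ (10 / 19 : ℝ) / (M + 1.3) := by positivity
    linarith

lemma X_add_lt_one {n k : ℕ} (hk : 1 ≤ k) (hkq : k < Nat.fib (n + 1)) :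
    0 < X n k ∧ X n k + gm ^ (n + 1) < 1 := by
  have h1 := X_pos (n := n) hk
  have h2 := X_lt hk hkq
  have := gm_pow_pos n
  constructor <;> linarith

lemma sin_gm_pow_pos {n : ℕ} (hn : n ≠ 0) : 0 < Real.sin (Real.pi * gm ^ n) :=
  sin_pi_mul_pos (gm_pow_pos n) (gm_pow_lt_one hn)

lemma T_arg_nonneg {n k : ℕ} (hk : 1 ≤ k) (hkq : k < Nat.fib (n + 1)) :
    0 ≤ Real.sin (Real.pi * gm ^ (n + 2)) * Real.sin (Real.pi * gm ^ (n + 3)) /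
      (Real.sin (Real.pi * X n k) * Real.sin (Real.pi * (X n k + gm ^ (n + 1)))) := by
  obtain ⟨h1, h2⟩ := X_add_lt_one hk hkq
  have p := gm_pow_pos (n + 1)
  have s1 := sin_pi_mul_pos h1 (by linarith)
  have s2 := sin_pi_mul_pos (by linarith) h2
  have s3 := sin_gm_pow_pos (n := n + 2) (by omega)
  have s4 := sin_gm_pow_pos (n := n + 3) (by omega)
  positivity

lemma T_nonneg {n k : ℕ} (hk : 1 ≤ k) (hkq : k < Nat.fib (n + 1)) : 0 ≤ T n k :=
  Real.log_nonneg (by linarith [T_arg_nonneg hk hkq])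

lemma E_nonneg (n : ℕ) : 0 ≤ E n := by
  unfold E
  have : 0 ≤ ∑ k ∈ Finset.Ico 1 (Nat.fib (n + 1)), T n k := Finset.sum_nonneg fun k hk => by
    rw [Finset.mem_Ico] at hk
    exact T_nonneg hk.1 hk.2
  linarith

lemma c_le (n : ℕ) : c n ≤ -2 * Real.log gm := by
  have h := lg_add_log_le (gm_pow_pos (n + 3)) (gm_pow_le_pow (show n + 1 ≤ n + 3 by omega))
    (gm_pow_lt_one (by omega))
  have h2 : gm ^ (n + 3) / gm ^ (n + 1) = gm ^ 2 := by
    have := gm_pos; field_simp; ring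
  rw [h2, Real.log_pow] at h
  have := E_nonneg n
  unfold c
  push_cast at h
  linarith

lemma T_reflect {n k : ℕ} (hk : 1 ≤ k) (hkq : k < Nat.fib (n + 1)) :
    T n (Nat.fib (n + 1) - k) = T n k := by
  unfold T
  rw [X_reflect hk hkq]
  have h1 : Real.sin (Real.pi * (1 - gm ^ (n + 1) - X n k)) =
      Real.sin (Real.pi * (X n k + gm ^ (n + 1))) := by
    rw [← Real.sin_pi_sub]; ring_nf
  have h2 : Real.sin (Real.pi * (1 - gm ^ (n + 1) - X n k + gm ^ (n + 1))) =
      Real.sin (Real.pi * X n k) := by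
    rw [← Real.sin_pi_sub]; ring_nf
  rw [h1, h2, mul_comm (Real.sin (Real.pi * (X n k + gm ^ (n + 1))))]

/-- Weights selecting one point out of each pair `k`, `q - k`. -/
noncomputable def wt (q k : ℕ) : ℝ := if 2 * k < q then 1 else if 2 * k = q then 1 / 2 else 0

lemma wt_nonneg (q k : ℕ) : 0 ≤ wt q k := by
  unfold wt; split_ifs <;> norm_num

lemma wt_le_one (q k : ℕ) : wt q k ≤ 1 := by
  unfold wt; split_ifs <;> norm_num

lemma wt_add {q k : ℕ} (hk : k < q) : wt q k + wt q (q - k) = 1 := by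
  unfold wt
  split_ifs <;> first | omega | norm_num

lemma E_eq (n : ℕ) :
    E n = ∑ k ∈ Finset.Ico 1 (Nat.fib (n + 1)), wt (Nat.fib (n + 1)) k * T n k := by
  set q := Nat.fib (n + 1) with hq
  have h1 : ∑ k ∈ Finset.Ico 1 q, wt q (q - k) * T n k = ∑ k ∈ Finset.Ico 1 q, wt q k * T n k := by
    refine Finset.sum_nbij' (fun k => q - k) (fun k => q - k) ?_ ?_ ?_ ?_ ?_
    · intro k hk; rw [Finset.mem_Ico] at *; omega
    · intro k hk; rw [Finset.mem_Ico] at *; omega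
    · intro k hk; rw [Finset.mem_Ico] at *; omega
    · intro k hk; rw [Finset.mem_Ico] at *; omega
    · intro k hk
      rw [Finset.mem_Ico] at hk
      rw [T_reflect hk.1 hk.2]
  have h2 : ∑ k ∈ Finset.Ico 1 q, T n k =
      ∑ k ∈ Finset.Ico 1 q, wt q k * T n k + ∑ k ∈ Finset.Ico 1 q, wt q (q - k) * T n k := by
    rw [← Finset.sum_add_distrib]
    refine Finset.sum_congr rfl fun k hk => ?_
    rw [Finset.mem_Ico] at hk
    rw [← add_mul, wt_add hk.2, one_mul]
  unfold E
  rw [h2, h1]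
  ring

lemma sin_pi_mul_le (x : ℝ) (hx : 0 ≤ x) : Real.sin (Real.pi * x) ≤ Real.pi * x :=
  Real.sin_le (by have := Real.pi_pos; positivity)

lemma two_mul_le_sin {x : ℝ} (h0 : 0 ≤ x) (h1 : x ≤ 1 / 2) : 2 * x ≤ Real.sin (Real.pi * x) := by
  have := Real.le_sin_mul (x := 2 * x) (by linarith) (by linarith)
  rwa [show Real.pi / 2 * (2 * x) = Real.pi * x by ring] at this

lemma mul_le_sin {x : ℝ} (h0 : 0 ≤ x) (h1 : x ≤ 0.573) : 1.695 * x ≤ Real.sin (Real.pi * x) := by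
  rcases le_total x (1 / 2) with h | h
  · linarith [two_mul_le_sin h0 h]
  · have h2 := Real.one_sub_sq_div_two_le_cos (x := Real.pi * (x - 1 / 2))
    have h3 : Real.cos (Real.pi * (x - 1 / 2)) = Real.sin (Real.pi * x) := by
      rw [← Real.cos_sub_pi_div_two]; ring_nf
    rw [h3] at h2
    have h4 : Real.pi * (x - 1 / 2) ≤ 0.23 := by nlinarith [Real.pi_lt_d2]
    have h5 : 0 ≤ Real.pi * (x - 1 / 2) := mul_nonneg Real.pi_pos.le (by linarith)
    nlinarith

lemma pi_sq_le : Real.pi ^ 2 ≤ 9.8697 := by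
  nlinarith [Real.pi_lt_d6, Real.pi_pos]

lemma T_le_of_sin {n k : ℕ} {a b : ℝ} (hk : 1 ≤ k) (hkq : k < Nat.fib (n + 1)) (ha : 0 < a)
    (hb : 0 < b) (h1 : a ≤ Real.sin (Real.pi * X n k))
    (h2 : b ≤ Real.sin (Real.pi * (X n k + gm ^ (n + 1)))) :
    T n k ≤ 9.8697 * gm ^ (2 * n + 5) / (a * b) := by
  have h3 : T n k ≤ _ := Real.log_le_sub_one_of_pos (by linarith [T_arg_nonneg hk hkq])
  refine h3.trans ?_
  rw [add_sub_cancel_left]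
  have e : gm ^ (2 * n + 5) = gm ^ (n + 2) * gm ^ (n + 3) := by ring
  have g2 := gm_pow_pos (n + 2)
  have g3 := gm_pow_pos (n + 3)
  have s2 := sin_pi_mul_le _ g2.le
  have s3 := sin_pi_mul_le _ g3.le
  have s4 := sin_gm_pow_pos (n := n + 3) (by omega)
  have := Real.pi_pos
  have e2 : Real.sin (Real.pi * gm ^ (n + 2)) * Real.sin (Real.pi * gm ^ (n + 3)) ≤
      9.8697 * gm ^ (2 * n + 5) := by
    calc _ ≤ (Real.pi * gm ^ (n + 2)) * (Real.pi * gm ^ (n + 3)) := by gcongr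
      _ = Real.pi ^ 2 * gm ^ (2 * n + 5) := by rw [e]; ring
      _ ≤ _ := by have := gm_pow_pos (2 * n + 5); gcongr; exact pi_sq_le
  have := gm_pow_pos (2 * n + 5)
  have := ha.le.trans h1
  gcongr

lemma two_mul_X_le {n k : ℕ} (hk : 1 ≤ k) (hkq : 2 * k ≤ Nat.fib (n + 1)) :
    2 * X n k + gm ^ (n + 1) ≤ 1 := by
  have h1 := X_mono n (show k ≤ Nat.fib (n + 1) - k by omega)
  rw [X_reflect hk (by omega)] at h1
  linarith

lemma T_le {n k : ℕ} (hn : 3 ≤ n) (hk : 1 ≤ k) (hkq : 2 * k ≤ Nat.fib (n + 1)) :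
    T n k ≤ 2.912 * gm ^ 5 * (1 / (th k * (th k + gm))) := by
  have h1 := two_mul_X_le hk hkq
  have h2 := (X_add_lt_one hk (show k < Nat.fib (n + 1) by omega)).1
  have g1 := gm_pow_pos (n + 1)
  have g0 := gm_pow_pos n
  have g4 : gm ^ (n + 1) ≤ gm ^ 4 := gm_pow_le_pow (by omega)
  have gb := gm_pow_four
  have gb2 := gm_gt
  have gb3 := gm_pos
  have hth := one_le_th hk
  have h := T_le_of_sin hk (show k < Nat.fib (n + 1) by omega)
    (show 0 < 2 * X n k by linarith) (show 0 < 1.695 * (X n k + gm ^ (n + 1)) by linarith)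
    (two_mul_le_sin h2.le (by linarith))
    (mul_le_sin (by linarith) (by linarith))
  refine h.trans ?_
  have e : 9.8697 * gm ^ (2 * n + 5) / (2 * X n k * (1.695 * (X n k + gm ^ (n + 1)))) =
      9.8697 / 3.39 * gm ^ 5 * (1 / (th k * (th k + gm))) := by
    rw [X_eq, show gm ^ (2 * n + 5) = gm ^ n * gm ^ n * gm ^ 5 by ring,
      show gm ^ n * th k + gm ^ (n + 1) = gm ^ n * (th k + gm) by ring]
    have : th k ≠ 0 := by linarith
    have : th k + gm ≠ 0 := by linarith
    field_simp
    norm_num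
  rw [e]
  gcongr
  norm_num

lemma wt_mul_T_le {n k : ℕ} (hn : 3 ≤ n) (hk : 1 ≤ k) :
    wt (Nat.fib (n + 1)) k * T n k ≤ 2.912 * gm ^ 5 * (1 / (th k * (th k + gm))) := by
  have hth := one_le_th hk
  have gb3 := gm_pos
  have hR : 0 ≤ 2.912 * gm ^ 5 * (1 / (th k * (th k + gm))) := by positivity
  rcases le_or_gt (2 * k) (Nat.fib (n + 1)) with h | h
  · have h1 := T_le hn hk h
    have h2 := T_nonneg hk (show k < Nat.fib (n + 1) by omega)
    nlinarith [wt_le_one (Nat.fib (n + 1)) k]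
  · have : wt (Nat.fib (n + 1)) k = 0 := by
      unfold wt; rw [if_neg (by omega), if_neg (by omega)]
    rw [this, zero_mul]; exact hR

lemma E_le {n : ℕ} (hn : 3 ≤ n) : E n ≤ 0.271 := by
  rw [E_eq, Finset.sum_Ico_eq_sum_range]
  have h1 : ∑ k ∈ Finset.range (Nat.fib (n + 1) - 1), wt (Nat.fib (n + 1)) (1 + k) * T n (1 + k) ≤
      ∑ k ∈ Finset.range (Nat.fib (n + 1) - 1),
        2.912 * gm ^ 5 * (1 / (th (k + 1) * (th (k + 1) + gm))) := by
    refine Finset.sum_le_sum fun k _ => ?_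
    rw [add_comm 1 k]
    exact wt_mul_T_le hn (by omega)
  rw [← Finset.mul_sum] at h1
  have h2 := sum_inv_th_le' (Nat.fib (n + 1) - 1)
  have h3 := gm_pow_five
  have h4 := gm_lt
  have h5 := gm_pow_pos 5
  nlinarith

lemma E_two_le : E 2 ≤ 0.12 := by
  have hf : Nat.fib 3 = 2 := by decide
  have g2 := gm_sq
  have g3 := gm_cube
  have gp := gm_pos
  have ga := gm_gt
  have gb := gm_lt
  have hX : X 2 1 = gm ^ 2 := by
    have : ⌊gm⌋₊ = 0 := Nat.floor_eq_zero.2 gm_lt_one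
    simp [X, this]
  have h1 : 2 * gm ^ 2 ≤ Real.sin (Real.pi * gm ^ 2) :=
    two_mul_le_sin (by positivity) (by linarith)
  have h2 : 2 * gm ^ 2 ≤ Real.sin (Real.pi * (gm ^ 2 + gm ^ 3)) := by
    have : Real.sin (Real.pi * (gm ^ 2 + gm ^ 3)) = Real.sin (Real.pi * gm ^ 2) := by
      rw [← Real.sin_pi_sub, show Real.pi - Real.pi * (gm ^ 2 + gm ^ 3) =
        Real.pi * (1 - (gm ^ 2 + gm ^ 3)) by ring]
      congr 2
      linarith
    rwa [this]
  have h := T_le_of_sin (n := 2) (k := 1) le_rfl (by rw [hf]; norm_num)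
    (show 0 < 2 * gm ^ 2 by positivity) (show 0 < 2 * gm ^ 2 by positivity)
    (by rwa [hX]) (by rwa [hX])
  have e : 9.8697 * gm ^ (2 * 2 + 5) / (2 * gm ^ 2 * (2 * gm ^ 2)) = 9.8697 / 4 * gm ^ 5 := by
    field_simp
    ring
  rw [e, gm_pow_five] at h
  have hE : E 2 = T 2 1 / 2 := by
    unfold E; rw [hf]; simp
  rw [hE]
  linarith

lemma le_lg_sub_lg {x : ℝ} (h0 : 0 < x) (h1 : x ≤ 0.25) :
    -2 * Real.log gm + (1 - 1 / (1 - 1.645 * x ^ 2)) ≤ lg x - lg (gm ^ 2 * x) := by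
  have hp := Real.pi_pos
  have hg := gm_pos
  have hg1 := gm_lt_one
  have hx2 : gm ^ 2 * x < 1 := by
    have : gm ^ 2 < 1 := gm_pow_lt_one (by norm_num)
    nlinarith
  have s0 := sin_pi_mul_pos (show 0 < gm ^ 2 * x by positivity) hx2
  have s1 := sin_pi_mul_le (gm ^ 2 * x) (by positivity)
  have hd : 0 < 1 - 1.645 * x ^ 2 := by nlinarith
  have s2 : Real.pi * x * (1 - 1.645 * x ^ 2) ≤ Real.sin (Real.pi * x) := by
    have h := Real.sin_ge_sub_cube (x := Real.pi * x) (by positivity)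
    have h2 : (Real.pi * x) ^ 3 / 6 ≤ Real.pi * x * (1.645 * x ^ 2) := by
      have : 0 ≤ Real.pi * x * x ^ 2 := by positivity
      nlinarith [pi_sq_le]
    linarith
  have l1 : lg (gm ^ 2 * x) ≤ Real.log (2 * (Real.pi * (gm ^ 2 * x))) :=
    Real.log_le_log (by positivity) (by linarith)
  have l2 : Real.log (2 * (Real.pi * x * (1 - 1.645 * x ^ 2))) ≤ lg x :=
    Real.log_le_log (by positivity) (by linarith)
  have e1 : Real.log (2 * (Real.pi * (gm ^ 2 * x))) =
      Real.log (2 * (Real.pi * x)) + 2 * Real.log gm := by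
    rw [show 2 * (Real.pi * (gm ^ 2 * x)) = 2 * (Real.pi * x) * gm ^ 2 by ring,
      Real.log_mul (by positivity) (by positivity), Real.log_pow]
    norm_num
  have e2 : Real.log (2 * (Real.pi * x * (1 - 1.645 * x ^ 2))) =
      Real.log (2 * (Real.pi * x)) + Real.log (1 - 1.645 * x ^ 2) := by
    rw [← mul_assoc, Real.log_mul (by positivity) hd.ne']
  have h3 := Real.one_sub_inv_le_log_of_pos hd
  rw [one_div]
  linarith

lemma le_c {n : ℕ} (hn : 2 ≤ n) : -2 * Real.log gm - 0.32 ≤ c n := by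
  have g3 := gm_cube
  have g4 := gm_pow_four
  have ga := gm_gt
  have gb := gm_lt
  have hn3 : gm ^ (n + 1) ≤ gm ^ 3 := gm_pow_le_pow (by omega)
  have p := gm_pow_pos (n + 1)
  have h := le_lg_sub_lg p (by linarith)
  rw [show gm ^ 2 * gm ^ (n + 1) = gm ^ (n + 3) by ring] at h
  unfold c
  have aux : ∀ b : ℝ, 0 < b → b ≤ 1 - 1.645 * (gm ^ (n + 1)) ^ 2 →
      1 / (1 - 1.645 * (gm ^ (n + 1)) ^ 2) ≤ 1 / b :=
    fun b hb hle => one_div_le_one_div_of_le hb hle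
  rcases eq_or_lt_of_le hn with rfl | hn
  · have h2 := aux 0.9 (by norm_num) (by nlinarith)
    norm_num at h2 h ⊢
    linarith [E_two_le]
  · have hn4 : gm ^ (n + 1) ≤ gm ^ 4 := gm_pow_le_pow (by omega)
    have h2 := aux 0.96 (by norm_num) (by nlinarith)
    norm_num at h2 h ⊢
    linarith [E_le hn]

lemma log_gm_lower : -0.485 ≤ Real.log gm := by
  rw [Real.le_log_iff_exp_le gm_pos, Real.exp_neg]
  have h := Real.sum_le_exp_of_nonneg (x := 0.485) (by norm_num) 4
  simp [Finset.sum_range_succ, Nat.factorial] at h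
  rw [inv_le_comm₀ (Real.exp_pos _) gm_pos]
  refine le_trans ?_ h
  rw [inv_le_comm₀ gm_pos (by norm_num)]
  refine le_trans ?_ gm_gt.le
  norm_num

lemma log_gm_upper : Real.log gm ≤ -0.47 := by
  rw [Real.log_le_iff_le_exp gm_pos, Real.exp_neg]
  have h := Real.exp_bound' (x := 0.47) (by norm_num) (by norm_num) (n := 4) (by norm_num)
  simp [Finset.sum_range_succ, Nat.factorial] at h
  rw [le_inv_comm₀ gm_pos (Real.exp_pos _)]
  refine h.trans ?_
  rw [le_inv_comm₀ (by norm_num) gm_pos]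
  refine gm_lt.le.trans ?_
  norm_num

lemma U_two : U 2 = lg (gm ^ 3) + lg (gm ^ 2) := by
  have hX : X 2 1 = gm ^ 2 := by
    have : ⌊gm⌋₊ = 0 := Nat.floor_eq_zero.2 gm_lt_one
    simp [X, this]
  rw [U_eq, V_eq, show Nat.fib (2 + 1) = 2 by decide]
  simp [hX]

lemma lg_gm : lg gm = lg (gm ^ 2) := by
  rw [gm_sq, lg_one_sub]

lemma U_three : U 3 = lg (gm ^ 4) + U 2 := by
  have hX : X 3 1 = gm ^ 3 := by
    have : ⌊gm⌋₊ = 0 := Nat.floor_eq_zero.2 gm_lt_one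
    simp [X, this]
  have hX2 : X 3 2 = gm := by
    have := X_reflect (n := 3) (k := 1) le_rfl (by decide)
    rw [hX, show Nat.fib (3 + 1) - 1 = 2 by decide] at this
    rw [this, gm_cube]
    norm_num [gm_pow_four]
    ring
  rw [U_eq, V_eq, U_two, show Nat.fib (3 + 1) = 3 by decide,
    show Finset.Ico 1 3 = {1, 2} by decide]
  simp [hX, hX2, lg_gm]

lemma lg_le_log_two {x : ℝ} (h0 : 0 < x) (h1 : x < 1) : lg x ≤ Real.log 2 := by
  have := sin_pi_mul_pos h0 h1
  exact Real.log_le_log (by positivity) (by linarith [Real.sin_le_one (Real.pi * x)])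

lemma lg_le_sub_one {x : ℝ} (h0 : 0 < x) (h1 : x < 1) : lg x ≤ 2 * (Real.pi * x) - 1 := by
  have := sin_pi_mul_pos h0 h1
  have h2 : lg x ≤ _ := Real.log_le_sub_one_of_pos (by positivity)
  linarith [sin_pi_mul_le x h0.le]

lemma U_two_bounds : 0.2 ≤ U 2 ∧ U 2 ≤ 1.18 := by
  have g2 := gm_sq
  have g3 := gm_cube
  have ga := gm_gt
  have gb := gm_lt
  have h2 : gm ^ 2 < 1 := by linarith
  have h3 : gm ^ 3 < 1 := by linarith
  rw [U_two]
  constructor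
  · rw [lg_add_lg (gm_pow_pos 3) h3 (gm_pow_pos 2) h2]
    have s3 := two_mul_le_sin (gm_pow_pos 3).le (by linarith)
    have s2 := two_mul_le_sin (gm_pow_pos 2).le (by linarith)
    have hm : (0.47 : ℝ) * 0.76 ≤ Real.sin (Real.pi * gm ^ 3) * Real.sin (Real.pi * gm ^ 2) :=
      mul_le_mul (by linarith) (by linarith) (by norm_num) (by linarith)
    have h := Real.one_sub_inv_le_log_of_pos (show (0 : ℝ) < 4 * (0.47 * 0.76) by norm_num)
    have h' := Real.log_le_log (by norm_num)
      (mul_le_mul_of_nonneg_left hm (show (0 : ℝ) ≤ 4 by norm_num))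
    norm_num at h h' ⊢
    linarith
  · have l2 := lg_le_log_two (gm_pow_pos 2) h2
    have l3 := lg_le_sub_one (gm_pow_pos 3) h3
    have := Real.log_two_lt_d9
    nlinarith [Real.pi_lt_d4, Real.pi_pos]

lemma lg_gm_pow_four_bounds : -0.15 ≤ lg (gm ^ 4) ∧ lg (gm ^ 4) ≤ 0 := by
  have g4 := gm_pow_four
  have ga := gm_gt
  have gb := gm_lt
  have p4 := gm_pow_pos 4
  have h4 : gm ^ 4 < 1 := by linarith
  constructor
  · have hp := Real.pi_gt_d2
    have h := Real.sin_ge_sub_cube (x := Real.pi * gm ^ 4) (by positivity)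
    have h1 : 0.4574 ≤ Real.pi * gm ^ 4 := by nlinarith
    have h2 : Real.pi * gm ^ 4 ≤ 0.4601 := by nlinarith [Real.pi_lt_d2]
    have h3 : (Real.pi * gm ^ 4) ^ 3 ≤ 0.4601 ^ 3 := by gcongr
    have h5 : 0.88 ≤ 2 * Real.sin (Real.pi * gm ^ 4) := by norm_num at h3 ⊢; linarith
    have l1 := Real.one_sub_inv_le_log_of_pos (show (0 : ℝ) < 0.88 by norm_num)
    have l2 : Real.log 0.88 ≤ lg (gm ^ 4) := Real.log_le_log (by norm_num) h5
    norm_num at l1 l2 ⊢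
    linarith
  · have := lg_le_sub_one p4 h4
    nlinarith [Real.pi_lt_d2, Real.pi_pos]

/-- A sequence that fails to be nonnegative at `0` must grow like `gm⁻ⁿ`. -/
lemma nonneg_of_gm_mul_le {a : ℕ → ℝ} (h : ∀ n, gm * a (n + 1) ≤ a n)
    (hlim : Tendsto (fun n => gm ^ n * a n) atTop (nhds 0)) : 0 ≤ a 0 := by
  have h1 : ∀ n, gm ^ n * a n ≤ a 0 := by
    intro n
    induction n with
    | zero => simp
    | succ n ih =>
      refine le_trans ?_ ih
      rw [pow_succ, mul_assoc]
      exact mul_le_mul_of_nonneg_left (h n) (gm_pow_pos n).le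
  exact le_of_tendsto' hlim h1

lemma tendsto_gm_pow_mul_shift (n : ℕ) (C : ℝ) :
    Tendsto (fun j => gm ^ j * (U (n + j + 1) + gm * U (n + j) - C)) atTop (nhds 0) := by
  have h1 := (tendsto_add_atTop_iff_nat n).2 tendsto_gm_pow_mul_U
  have h2 := (tendsto_add_atTop_iff_nat (n + 1)).2 tendsto_gm_pow_mul_U
  have h3 := tendsto_pow_atTop_nhds_zero_of_lt_one gm_pos.le gm_lt_one
  have h4 := ((h2.const_mul (gm ^ (n + 1))⁻¹).add (h1.const_mul (gm * (gm ^ n)⁻¹))).sub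
    (h3.const_mul C)
  simp only [mul_zero, add_zero, sub_zero] at h4
  refine h4.congr fun j => ?_
  have := gm_pos
  rw [show n + j + 1 = j + (n + 1) by ring, show n + j = j + n by ring]
  field_simp
  ring

lemma gm_mul_shift (n : ℕ) :
    gm * (U (n + 2) + gm * U (n + 1)) = U (n + 1) + gm * U n - gm * c n := by
  rw [U_rec]
  linear_combination U (n + 1) * gm_sq

lemma le_U_succ_add {N n : ℕ} {C : ℝ} (hC : ∀ j ≥ N, C ≤ c j) (hn : N ≤ n) :
    C * (1 + gm) ≤ U (n + 1) + gm * U n := by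
  have h := nonneg_of_gm_mul_le (a := fun j => U (n + j + 1) + gm * U (n + j) - C * (1 + gm))
    (fun j => ?_) (tendsto_gm_pow_mul_shift n _)
  · simpa using h
  · have h1 := gm_mul_shift (n + j)
    have h2 := hC (n + j) (by omega)
    have h3 : gm * (C * (1 + gm)) = C := by linear_combination C * gm_sq
    have h4 := mul_le_mul_of_nonneg_left h2 gm_pos.le
    simp only [← add_assoc]
    rw [mul_sub, h1, h3]
    linarith

lemma U_succ_add_le {N n : ℕ} {C : ℝ} (hC : ∀ j ≥ N, c j ≤ C) (hn : N ≤ n) :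
    U (n + 1) + gm * U n ≤ C * (1 + gm) := by
  have h := nonneg_of_gm_mul_le (a := fun j => -(U (n + j + 1) + gm * U (n + j) - C * (1 + gm)))
    (fun j => ?_)
    (by simpa only [mul_neg, neg_zero] using (tendsto_gm_pow_mul_shift n (C * (1 + gm))).neg)
  · simpa using h
  · have h1 := gm_mul_shift (n + j)
    have h2 := hC (n + j) (by omega)
    have h3 : gm * (C * (1 + gm)) = C := by linear_combination C * gm_sq
    have h4 := mul_le_mul_of_nonneg_left h2 gm_pos.le
    simp only [← add_assoc]
    rw [mul_neg, mul_sub, h1, h3]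
    linarith

lemma U_succ_sub_succ (n : ℕ) :
    U (n + 2) - (1 + gm) * U (n + 1) = -gm * (U (n + 1) - (1 + gm) * U n) - c n := by
  rw [U_rec]
  linear_combination (-U n) * gm_sq

lemma U_succ_sub_le (n : ℕ) : U (n + 2 + 1) - (1 + gm) * U (n + 2) ≤
    2 * Real.log gm * gm + 0.32 * (1 + gm) := by
  have g2 := gm_sq
  have ga := gm_gt
  have gb := gm_lt
  have l1 := log_gm_lower
  have l2 := log_gm_upper
  obtain ⟨u1, u2⟩ := U_two_bounds
  obtain ⟨v1, v2⟩ := lg_gm_pow_four_bounds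
  have hy2 : U 3 - (1 + gm) * U 2 = lg (gm ^ 4) - gm * U 2 := by rw [U_three]; ring
  induction n using Nat.twoStepInduction with
  | zero =>
    refine hy2.trans_le ?_
    nlinarith
  | one =>
    have h := U_succ_sub_succ 2
    have hc := le_c (n := 2) le_rfl
    refine h.trans_le ?_
    rw [hy2]
    nlinarith
  | more n ih _ =>
    have h1 := U_succ_sub_succ (n + 2)
    have h2 := U_succ_sub_succ (n + 2 + 1)
    have hc1 := c_le (n + 2)
    have hc2 := le_c (n := n + 2 + 1) (by omega)
    have e : U (n + 2 + 2 + 1) - (1 + gm) * U (n + 2 + 2) =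
        gm ^ 2 * (U (n + 2 + 1) - (1 + gm) * U (n + 2)) + gm * c (n + 2) - c (n + 2 + 1) := by
      rw [show n + 2 + 2 + 1 = n + 2 + 1 + 2 by ring, h2]
      rw [show n + 2 + 2 = n + 2 + 1 + 1 by ring] at *
      linear_combination (-gm) * h1
    rw [e]
    have i1 := mul_le_mul_of_nonneg_left ih (gm_pow_pos 2).le
    have i2 := mul_le_mul_of_nonneg_left hc1 gm_pos.le
    have i3 : gm ^ 2 * (2 * Real.log gm * gm + 0.32 * (1 + gm)) + gm * (-2 * Real.log gm) -
        (-2 * Real.log gm - 0.32) = 2 * Real.log gm * gm + 0.32 * (1 + gm) := by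
      linear_combination (0.32 * gm + 2 * Real.log gm * (gm - 1)) * g2
    linarith

lemma neg_log_gm_le_U (n : ℕ) : -Real.log gm ≤ U n := by
  have ga := gm_gt
  have gb := gm_lt
  have h1 : -Real.log gm ≤ lg gm := by
    have h2 := Real.one_sub_sq_div_two_le_cos (x := Real.pi * (gm - 1 / 2))
    have h3 : Real.cos (Real.pi * (gm - 1 / 2)) = Real.sin (Real.pi * gm) := by
      rw [← Real.cos_sub_pi_div_two]; ring_nf
    rw [h3] at h2
    have h4 : Real.pi * (gm - 1 / 2) ≤ 0.38 := by nlinarith [Real.pi_lt_d2]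
    have h5 : 0 ≤ Real.pi * (gm - 1 / 2) := mul_nonneg Real.pi_pos.le (by linarith)
    have h6 : gm⁻¹ = 1 + gm := by
      refine inv_eq_of_mul_eq_one_right ?_
      linear_combination gm_sq
    rw [← Real.log_inv, h6]
    exact Real.log_le_log (by linarith) (by nlinarith)
  match n with
  | 0 => simpa [U, S] using h1
  | 1 => simpa [U, S] using h1
  | n + 2 =>
    have hw := le_U_succ_add (N := 2) (n := n + 2) (fun j hj => le_c hj) (by omega)
    have hy := U_succ_sub_le n
    have l2 := log_gm_upper
    nlinarith

lemma V_monotone : Monotone V := by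
  refine monotone_nat_of_le_succ fun n => ?_
  match n with
  | 0 => simp [V]
  | n + 1 =>
    have h1 := U_eq (n + 2)
    have h2 := U_eq (n + 1)
    have h3 := U_rec n
    have h4 := E_nonneg n
    have h5 := neg_log_gm_le_U n
    have h6 := lg_add_log_le (gm_pow_pos (n + 2)) (gm_pow_le_pow (show n + 1 ≤ n + 2 by omega))
      (gm_pow_lt_one (by omega))
    have h7 : gm ^ (n + 2) / gm ^ (n + 1) = gm := by
      have := gm_pos; field_simp; ring
    rw [h7] at h6
    unfold c at h3
    rw [show n + 2 + 1 = n + 3 by ring] at h1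
    rw [show n + 1 + 1 = n + 2 by ring] at *
    linarith

lemma tendsto_sin_div (a : ℝ) :
    Tendsto (fun n : ℕ => Real.sin (Real.pi * (gm ^ n * a)) / gm ^ n) atTop
      (nhds (Real.pi * a)) := by
  have h0 : HasDerivAt (fun x : ℝ => x * (Real.pi * a)) (Real.pi * a) 0 := by
    simpa using (hasDerivAt_id (0 : ℝ)).mul_const (Real.pi * a)
  have h1 : HasDerivAt (fun x : ℝ => Real.sin (x * (Real.pi * a))) (Real.pi * a) 0 := by
    simpa using h0.sin
  have h2 := hasDerivAt_iff_tendsto_slope_zero.1 h1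
  have h3 : Tendsto (fun n : ℕ => gm ^ n) atTop (nhdsWithin 0 {0}ᶜ) :=
    tendsto_nhdsWithin_iff.2 ⟨tendsto_pow_atTop_nhds_zero_of_lt_one gm_pos.le gm_lt_one,
      Eventually.of_forall fun n => (gm_pow_pos n).ne'⟩
  refine (h2.comp h3).congr fun n => ?_
  simp only [Function.comp_apply, zero_add, zero_mul, Real.sin_zero, sub_zero, smul_eq_mul]
  rw [div_eq_inv_mul]
  ring_nf

lemma exists_tendsto_lg_sub :
    ∃ l, Tendsto (fun n => lg (gm ^ (n + 1)) - lg (gm ^ (n + 3))) atTop (nhds l) := by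
  have hp := Real.pi_pos
  have hg := gm_pos
  have h := (tendsto_sin_div gm).div (tendsto_sin_div (gm ^ 3)) (by positivity)
  refine ⟨_, (h.log (by positivity)).congr fun n => ?_⟩
  have s1 := sin_gm_pow_pos (n := n + 1) (by omega)
  have s3 := sin_gm_pow_pos (n := n + 3) (by omega)
  unfold lg
  rw [← Real.log_div (by positivity) (by positivity), Pi.div_apply, ← pow_succ, ← pow_add]
  congr 1
  field_simp

lemma exists_tendsto_T {k : ℕ} (hk : 1 ≤ k) :
    ∃ l, Tendsto (fun n => T n k) atTop (nhds l) := by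
  have hp := Real.pi_pos
  have hg := gm_pos
  have hth := one_le_th hk
  have h := ((tendsto_sin_div (gm ^ 2)).mul (tendsto_sin_div (gm ^ 3))).div
    ((tendsto_sin_div (th k)).mul (tendsto_sin_div (th k + gm))) (by positivity)
  refine ⟨_, ((h.const_add 1).log (by positivity)).congr fun n => ?_⟩
  unfold T
  rw [Pi.div_apply, X_eq, ← pow_add, ← pow_add,
    show gm ^ n * th k + gm ^ (n + 1) = gm ^ n * (th k + gm) by ring]
  congr 2
  rw [div_mul_div_comm, div_mul_div_comm, div_div_div_cancel_right₀ (by positivity)]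

lemma E_eq_tsum (n : ℕ) :
    E n = ∑' k, wt (Nat.fib (n + 1)) (k + 1) * T n (k + 1) := by
  have hq := fib_succ_pos n
  rw [E_eq, Finset.sum_Ico_eq_sum_range, tsum_eq_sum (s := Finset.range (Nat.fib (n + 1) - 1))]
  · simp only [add_comm 1]
  · intro k hk
    rw [Finset.mem_range] at hk
    have : wt (Nat.fib (n + 1)) (k + 1) = 0 := by
      unfold wt; rw [if_neg (by omega), if_neg (by omega)]
    rw [this, zero_mul]

lemma tendsto_fib_succ : Tendsto (fun n => Nat.fib (n + 1)) atTop atTop :=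
  tendsto_atTop_mono (fun n => Nat.succ_le_succ_iff.1 (Nat.le_fib_add_one (n + 1))) tendsto_id

lemma exists_tendsto_E : ∃ l, Tendsto E atTop (nhds l) := by
  choose l hl using fun k : ℕ => exists_tendsto_T (k := k + 1) (by omega)
  have hR : ∀ k, 0 ≤ 1 / (th (k + 1) * (th (k + 1) + gm)) := fun k => by
    have := one_le_th (k := k + 1) (by omega)
    have := gm_pos
    positivity
  have hsum := (summable_of_sum_range_le hR sum_inv_th_le').mul_left (2.912 * gm ^ 5)
  refine ⟨∑' k, l k, ?_⟩
  have h := tendsto_tsum_of_dominated_convergence (𝓕 := atTop)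
    (f := fun n k => wt (Nat.fib (n + 1)) (k + 1) * T n (k + 1)) (g := l) hsum ?_ ?_
  · exact h.congr fun n => (E_eq_tsum n).symm
  · intro k
    refine (hl k).congr' ?_
    filter_upwards [tendsto_fib_succ.eventually_gt_atTop (2 * (k + 1))] with n hn
    have : wt (Nat.fib (n + 1)) (k + 1) = 1 := by unfold wt; rw [if_pos hn]
    rw [this, one_mul]
  · filter_upwards [eventually_ge_atTop 3] with n hn k
    rw [Real.norm_eq_abs, abs_of_nonneg]
    · exact wt_mul_T_le hn (by omega)
    · rcases lt_or_ge (k + 1) (Nat.fib (n + 1)) with h | h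
      · exact mul_nonneg (wt_nonneg _ _) (T_nonneg (by omega) h)
      · have hq := fib_succ_pos n
        have : wt (Nat.fib (n + 1)) (k + 1) = 0 := by
          unfold wt; rw [if_neg (by omega), if_neg (by omega)]
        rw [this, zero_mul]

lemma exists_tendsto_c : ∃ l, Tendsto c atTop (nhds l) := by
  obtain ⟨a, ha⟩ := exists_tendsto_lg_sub
  obtain ⟨b, hb⟩ := exists_tendsto_E
  exact ⟨a - b, ha.sub hb⟩

lemma tendsto_zero_of_abs_succ_le {z e : ℕ → ℝ} (he : Tendsto e atTop (nhds 0))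
    (h : ∀ n, |z (n + 1)| ≤ e n + gm * |z n|) : Tendsto z atTop (nhds 0) := by
  have hg := gm_pos
  have hg1 := gm_lt
  rw [Metric.tendsto_atTop]
  intro ε hε
  obtain ⟨N, hN⟩ := Metric.tendsto_atTop.1 he (ε / 10) (by positivity)
  have h1 : ∀ j, |z (N + j)| ≤ gm ^ j * |z N| + ε / 2 := by
    intro j
    induction j with
    | zero => simp; linarith
    | succ j ih =>
      have h2 := h (N + j)
      have h3 := hN (N + j) (by omega)
      rw [Real.dist_eq, sub_zero, abs_lt] at h3
      have h4 := mul_le_mul_of_nonneg_left ih hg.le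
      rw [← add_assoc, pow_succ]
      nlinarith
  have h2 : Tendsto (fun j : ℕ => gm ^ j * |z N|) atTop (nhds 0) := by
    simpa using (tendsto_pow_atTop_nhds_zero_of_lt_one gm_pos.le gm_lt_one).mul_const |z N|
  obtain ⟨M, hM⟩ := (h2.eventually_lt_const (show 0 < ε / 2 by positivity)).exists_forall_of_atTop
  refine ⟨N + M, fun n hn => ?_⟩
  obtain ⟨j, rfl⟩ := Nat.exists_eq_add_of_le (show N ≤ n by omega)
  rw [Real.dist_eq, sub_zero]
  linarith [h1 j, hM j (by omega)]

lemma tendsto_U {l : ℝ} (hl : Tendsto c atTop (nhds l)) : Tendsto U atTop (nhds l) := by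
  have hg := gm_pos
  have h1 : Tendsto (fun n => U (n + 1) + gm * U n - l * (1 + gm)) atTop (nhds 0) := by
    rw [Metric.tendsto_atTop]
    intro ε hε
    obtain ⟨N, hN⟩ := Metric.tendsto_atTop.1 hl (ε / 2) (by positivity)
    refine ⟨N, fun n hn => ?_⟩
    have h2 : ∀ j ≥ N, l - ε / 2 ≤ c j := fun j hj => by
      have := hN j hj
      rw [Real.dist_eq, abs_lt] at this
      linarith
    have h3 : ∀ j ≥ N, c j ≤ l + ε / 2 := fun j hj => by
      have := hN j hj
      rw [Real.dist_eq, abs_lt] at this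
      linarith
    have h4 := le_U_succ_add h2 hn
    have h5 := U_succ_add_le h3 hn
    rw [Real.dist_eq, sub_zero, abs_lt]
    constructor <;> nlinarith [gm_lt_one]
  have h2 := tendsto_zero_of_abs_succ_le (z := fun n => U n - l) (by simpa using h1.abs) fun n => by
    have e : U (n + 1) - l = (U (n + 1) + gm * U n - l * (1 + gm)) - gm * (U n - l) := by ring
    rw [e]
    refine (abs_sub _ _).trans ?_
    rw [abs_mul, abs_of_pos hg]
  simpa using h2.add_const l

lemma fibq_eq : ∀ n, fibq n = Nat.fib (n + 1)
  | 0 => rfl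
  | 1 => rfl
  | n + 2 => by
    rw [fibq, fibq_eq (n + 1), fibq_eq n, Nat.fib_add_two (n := n + 1), add_comm]

lemma sum_log_eq (n : ℕ) :
    ∑ j ∈ Finset.Icc 1 n, Real.log (2 - 2 * Real.cos (2 * Real.pi * j * gm)) = 2 * S n 0 := by
  have h : Finset.Icc 1 n = Finset.Ico 1 (n + 1) := by ext; simp
  rw [h, Finset.sum_Ico_eq_sum_range, S, Finset.mul_sum]
  refine Finset.sum_congr (by simp) fun k _ => ?_
  rw [lg, add_zero, show (2 : ℝ) * Real.log (2 * Real.sin (Real.pi * ((k + 1 : ℕ) * gm))) =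
    (2 : ℕ) * Real.log (2 * Real.sin (Real.pi * ((k + 1 : ℕ) * gm))) by norm_num, ← Real.log_pow,
    add_comm 1 k,
    show 2 * Real.pi * ((k + 1 : ℕ) : ℝ) * gm = 2 * (Real.pi * ((k + 1 : ℕ) * gm)) by ring,
    Real.cos_two_mul, mul_pow, Real.sin_sq]
  congr 1
  ring

lemma eventually_lt_S {l a : ℝ} (hl : Tendsto U atTop (nhds l)) (ha : a < l) :
    ∀ᶠ N in atTop, a < S N 0 := by
  obtain ⟨M, hM⟩ := (hl.eventually_const_lt ha).exists_forall_of_atTop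
  filter_upwards [eventually_ge_atTop (Nat.fib (M + 1))] with N hN
  have h1 : M + 1 ≤ Nat.greatestFib N := Nat.le_greatestFib.2 hN
  obtain ⟨m, hm⟩ := Nat.exists_eq_add_of_le' (show 1 ≤ Nat.greatestFib N by omega)
  refine (hM m (by omega)).trans_le (U_le_S V_monotone ?_ ?_)
  · rw [← hm]; exact Nat.fib_greatestFib_le N
  · have := Nat.lt_fib_greatestFib_add_one N
    rwa [hm] at this

end GoldenSudler

open GoldenSudler

/-- for the golden mean `α = (√5 - 1)/2`,
`Sℓ(n) = Σ_{j=1}^n log(2 - 2cos(2πjα))`, and `q_n` the Fibonacci denominators of the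
convergents of `α`, the sequence `Sℓ(q_n)` converges to a limit `L`, `L > 0`, and
`liminf_{n→∞} Sℓ(n) = L`. -/
theorem stmt13 (α : ℝ) (hα : α = (Real.sqrt 5 - 1) / 2)
    (Sl : ℕ → ℝ)
    (hSl : ∀ n : ℕ, Sl n = ∑ j ∈ Finset.Icc 1 n,
      Real.log (2 - 2 * Real.cos (2 * Real.pi * j * α))) :
    ∃ L : ℝ, Tendsto (fun n : ℕ => Sl (fibq n)) atTop (nhds L) ∧ 0 < L ∧
      liminf Sl atTop = L := by
  obtain rfl : α = gm := hα
  have hS : Sl = fun n => 2 * S n 0 := funext fun n => (hSl n).trans (sum_log_eq n)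
  obtain ⟨l, hl⟩ := exists_tendsto_c
  have hU := tendsto_U hl
  have hlim : Tendsto (fun n : ℕ => Sl (fibq n)) atTop (nhds (2 * l)) := by
    refine (hU.const_mul 2).congr fun n => ?_
    rw [hS, fibq_eq, U]
  have hpos : 0 < l := by
    have := ge_of_tendsto' hU neg_log_gm_le_U
    linarith [log_gm_upper]
  have hq : Tendsto fibq atTop atTop :=
    tendsto_fib_succ.congr fun n => (fibq_eq n).symm
  have hev : ∀ a < 2 * l, ∀ᶠ N in atTop, a ≤ Sl N := fun a ha => by
    filter_upwards [eventually_lt_S hU (show a / 2 < l by linarith)] with N hN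
    rw [hS]; linarith
  have hfr : ∀ a > 2 * l, ∃ᶠ N in atTop, Sl N ≤ a := fun a ha =>
    hq.frequently ((hlim.eventually_le_const ha).frequently)
  refine ⟨2 * l, hlim, by linarith, le_antisymm ?_ ?_⟩
  · refine le_of_forall_gt_imp_ge_of_dense fun a ha => ?_
    exact liminf_le_of_frequently_le (hfr a ha)
      (isBoundedUnder_of_eventually_ge (hev (2 * l - 1) (by linarith)))
  · refine le_of_forall_lt_imp_le_of_dense fun a ha => ?_
    exact le_liminf_of_le (IsCoboundedUnder.of_frequently_le (hfr (2 * l + 1) (by linarith)))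
      (hev a ha)
end
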